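/- Let 1<p<∞ and let Ω ⊆ ℝ^N be an open set such that λ_{k,p}^{LS}(Ω) < E_p(Ω) for some k ∈ ℕ\{0}. If E_p(Ω) < +∞, then for every ℓ ∈ {1,…,k} there exist constants C_ℓ = C_ℓ(N,p,Ω) > 0 and α_ℓ = α_ℓ(p,Ω) > 0 such that every eigenfunction u_ℓ ∈ W^{1,p}_0(Ω) associated to the eigenvalue λ_{ℓ,p}^{LS}(Ω) satisfies |u_ℓ(x)| ≤ C_ℓ ‖u_ℓ‖_{L^p(Ω)} e^{−α_ℓ |x|} for every x ∈ Ω. If E_p(Ω) = +∞, then for every ℓ ∈ ℕ\{0} and every α > 0 there exists C_ℓ = C_ℓ(N,p,Ω,α) > 0 such that |u_ℓ(x)| ≤ C_ℓ ‖u_ℓ‖_{L^p(Ω)} e^{−α |x|} for every x ∈ Ω. -/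

import Mathlib

open MeasureTheory Filter Topology Metric Set ENNReal
open scoped RealInnerProductSpace

noncomputable section

/-- Euclidean space `ℝ^N`. -/
abbrev EucN (N : ℕ) := EuclideanSpace ℝ (Fin N)

/-- A test function on an open set `Ω ⊆ ℝ^N`: smooth, with compact support contained in `Ω`. -/
def IsTestFun {N : ℕ} (Ω : Set (EucN N)) (φ : EucN N → ℝ) : Prop :=
  ContDiff ℝ (⊤ : ℕ∞) φ ∧ HasCompactSupport φ ∧ tsupport φ ⊆ Ω

/-- Pairs `(u, g)` in `L^q × L^q`, thought of as a function together with its (weak) gradient. -/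
abbrev SobPair (N : ℕ) (q : ℝ≥0∞) :=
  Lp ℝ q (volume : Measure (EucN N)) × Lp (EucN N) q (volume : Measure (EucN N))

/-- A pair given (a.e.) by a test function and its gradient. -/
def IsTestPair {N : ℕ} (q : ℝ≥0∞) (Ω : Set (EucN N)) (w : SobPair N q) : Prop :=
  ∃ ψ : EucN N → ℝ, IsTestFun Ω ψ ∧ (⇑w.1 =ᵐ[volume] ψ) ∧
    (⇑w.2 =ᵐ[volume] fun x => gradient ψ x)

theorem fact_one_le_ofReal {p : ℝ} (hp : 1 ≤ p) : Fact (1 ≤ ENNReal.ofReal p) :=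
  ⟨ENNReal.one_le_ofReal.mpr hp⟩

/-- The Sobolev space `W^{1,p}_0(Ω)`, realized as the closure in `L^p × L^p` of the set of
pairs (test function, its gradient). -/
def W10 (N : ℕ) (p : ℝ) (hp : 1 ≤ p) (Ω : Set (EucN N)) :
    Set (SobPair N (ENNReal.ofReal p)) :=
  letI := fact_one_le_ofReal hp
  closure {w | IsTestPair (ENNReal.ofReal p) Ω w}

/-- The first eigenvalue `λ_{1,p}(Ω)` (as an extended real, `∞` if there are no admissible
functions). -/
def lambda1p (N : ℕ) (p : ℝ) (hp : 1 ≤ p) (Ω : Set (EucN N)) : ℝ≥0∞ :=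
  sInf {t | ∃ w ∈ W10 N p hp Ω, (∫ x, |w.1 x| ^ p) = 1 ∧
    t = ENNReal.ofReal (∫ x, ‖w.2 x‖ ^ p)}

/-- The `L^p` Poincaré constant "at infinity" `E_p(Ω)`. -/
def Einfty (N : ℕ) (p : ℝ) (hp : 1 ≤ p) (Ω : Set (EucN N)) : ℝ≥0∞ :=
  ⨆ R ∈ Set.Ioi (0 : ℝ), lambda1p N p hp (Ω \ closure (ball (0 : EucN N) R))

/-- There is a continuous odd map from `A` to the unit sphere `S^{j-1} ⊆ ℝ^j`. -/
def HasOddMapToSphere {Z : Type*} [NormedAddCommGroup Z] (A : Set Z) (j : ℕ) : Prop :=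
  ∃ f : Z → EuclideanSpace ℝ (Fin j),
    ContinuousOn f A ∧ (∀ x ∈ A, ‖f x‖ = 1) ∧ ∀ x ∈ A, f (-x) = -f x

/-- The Krasnosel'skii genus of `A` is at least `k`. -/
def genusGE {Z : Type*} [NormedAddCommGroup Z] (A : Set Z) (k : ℕ) : Prop :=
  ∀ j : ℕ, HasOddMapToSphere A j → k ≤ j

/-- The Krasnosel'skii genus of `A`, valued in `ℕ∞`. -/
def genus {Z : Type*} [NormedAddCommGroup Z] (A : Set Z) : ℕ∞ :=
  sInf {k : ℕ∞ | ∃ j : ℕ, (j : ℕ∞) = k ∧ HasOddMapToSphere A j}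

/-- The class `𝒲_{k,p}(Ω)` of compact symmetric subsets of `S_p(Ω) ∩ W^{1,p}_0(Ω)` with
genus at least `k`. -/
def SobClass (N : ℕ) (p : ℝ) (hp : 1 ≤ p) (Ω : Set (EucN N)) (k : ℕ) :
    Set (Set (SobPair N (ENNReal.ofReal p))) :=
  letI := fact_one_le_ofReal hp
  {K | K ⊆ W10 N p hp Ω ∧ (∀ w ∈ K, (∫ x, |w.1 x| ^ p) = 1) ∧
       (∀ w ∈ K, -w ∈ K) ∧ IsCompact K ∧ genusGE K k}

/-- The `k`-th minmax Ljusternik–Schnirelmann value `λ_{k,p}^{LS}(Ω)`. -/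
def lambdaLS (N : ℕ) (p : ℝ) (hp : 1 ≤ p) (Ω : Set (EucN N)) (k : ℕ) : ℝ≥0∞ :=
  ⨅ K ∈ SobClass N p hp Ω k, ⨆ w ∈ K, ENNReal.ofReal (∫ x, ‖w.2 x‖ ^ p)

/-- `w = (u, ∇u)` is an eigenfunction of the Dirichlet `p`-Laplacian on `Ω` associated to the
eigenvalue `lam`. -/
def IsEigenfunction (N : ℕ) (p : ℝ) (hp : 1 ≤ p) (Ω : Set (EucN N)) (lam : ℝ)
    (w : SobPair N (ENNReal.ofReal p)) : Prop :=
  w ∈ W10 N p hp Ω ∧ w ≠ 0 ∧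
  ∀ φ : EucN N → ℝ, IsTestFun Ω φ →
    (∫ x, ‖w.2 x‖ ^ (p - 2) * ⟪w.2 x, gradient φ x⟫) =
      lam * ∫ x, |w.1 x| ^ (p - 2) * (w.1 x) * φ x

/-- `lam` is an eigenvalue of the Dirichlet `p`-Laplacian on `Ω`. -/
def IsEigenvalue (N : ℕ) (p : ℝ) (hp : 1 ≤ p) (Ω : Set (EucN N)) (lam : ℝ) : Prop :=
  ∃ w, IsEigenfunction N p hp Ω lam w

/-- `v = (v, ∇v)` is a non-negative weak subsolution of `-Δ_p u = lam · u^{p-1}` in `Ω`. -/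
def IsSubsolution (N : ℕ) (p : ℝ) (hp : 1 ≤ p) (Ω : Set (EucN N)) (lam : ℝ)
    (v : SobPair N (ENNReal.ofReal p)) : Prop :=
  v ∈ W10 N p hp Ω ∧ (∀ᵐ x, 0 ≤ v.1 x) ∧
  ∀ φ ∈ W10 N p hp Ω, (∀ᵐ x, 0 ≤ φ.1 x) →
    (∫ x, ‖v.2 x‖ ^ (p - 2) * ⟪v.2 x, φ.2 x⟫) ≤ lam * ∫ x, (v.1 x) ^ (p - 1) * φ.1 x

/-- A strongly confining potential. -/
def StronglyConfining (N : ℕ) (V : EucN N → ℝ) : Prop :=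
  LocallyIntegrable V volume ∧ (∀ᵐ x, 0 ≤ V x) ∧
  ∃ α : ℝ → ℝ, (∀ R > (0 : ℝ), 0 < α R) ∧ MonotoneOn α (Set.Ioi 0) ∧
    Tendsto α atTop atTop ∧
    ∀ R > (0 : ℝ), ∀ᵐ x, x ∉ ball (0 : EucN N) R → α R ≤ V x

/-- Triples `(u, g, h)` in `L^q × L^q × L^q`; `h` plays the role of `V^{1/p} u` in the weighted
Sobolev space. -/
abbrev SobTriple (N : ℕ) (q : ℝ≥0∞) :=
  Lp ℝ q (volume : Measure (EucN N)) × Lp (EucN N) q (volume : Measure (EucN N)) ×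
    Lp ℝ q (volume : Measure (EucN N))

/-- A triple given (a.e.) by a test function, its gradient, and `V^{1/p}` times it. -/
def IsTestTriple {N : ℕ} (q : ℝ≥0∞) (p : ℝ) (Ω : Set (EucN N)) (V : EucN N → ℝ)
    (w : SobTriple N q) : Prop :=
  ∃ ψ : EucN N → ℝ, IsTestFun Ω ψ ∧ (⇑w.1 =ᵐ[volume] ψ) ∧
    (⇑w.2.1 =ᵐ[volume] fun x => gradient ψ x) ∧
    (⇑w.2.2 =ᵐ[volume] fun x => (V x) ^ (1/p) * ψ x)

/-- The weighted Sobolev space `W^{1,p}_0(Ω; V)`, realized as a closure of triples coming from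
test functions; the norm topology of `L^p × L^p × L^p` on such triples corresponds exactly to
the weighted Sobolev norm `(∫|∇u|^p + ∫(1+V)|u|^p)^{1/p}`. -/
def W10V (N : ℕ) (p : ℝ) (hp : 1 ≤ p) (Ω : Set (EucN N)) (V : EucN N → ℝ) :
    Set (SobTriple N (ENNReal.ofReal p)) :=
  letI := fact_one_le_ofReal hp
  closure {w | IsTestTriple (ENNReal.ofReal p) p Ω V w}

/-- The class `𝒲_{k,p}(Ω; V)` for the weighted space. -/
def SobClassV (N : ℕ) (p : ℝ) (hp : 1 ≤ p) (Ω : Set (EucN N)) (V : EucN N → ℝ) (k : ℕ) :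
    Set (Set (SobTriple N (ENNReal.ofReal p))) :=
  letI := fact_one_le_ofReal hp
  {K | K ⊆ W10V N p hp Ω V ∧ (∀ w ∈ K, (∫ x, |w.1 x| ^ p) = 1) ∧
       (∀ w ∈ K, -w ∈ K) ∧ IsCompact K ∧ genusGE K k}

/-- The perturbed minmax value `λ_{k,p}^{LS}(Ω; ε V)`, for the functional
`G(φ) = ∫|∇φ|^p + ε ∫ V |φ|^p`. -/
def lambdaLSV (N : ℕ) (p : ℝ) (hp : 1 ≤ p) (Ω : Set (EucN N)) (V : EucN N → ℝ)
    (ε : ℝ) (k : ℕ) : ℝ≥0∞ :=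
  ⨅ K ∈ SobClassV N p hp Ω V k, ⨆ w ∈ K,
    ENNReal.ofReal ((∫ x, ‖w.2.1 x‖ ^ p) + ε * ∫ x, |w.2.2 x| ^ p)

/-- `w` is a constrained critical point, at level `lam`, of the perturbed functional
`G(φ) = ∫|∇φ|^p + ε ∫ V |φ|^p` on the unit sphere of `L^p`. -/
def IsCriticalV (N : ℕ) (p : ℝ) (hp : 1 ≤ p) (Ω : Set (EucN N)) (V : EucN N → ℝ)
    (ε : ℝ) (lam : ℝ) (w : SobTriple N (ENNReal.ofReal p)) : Prop :=
  w ∈ W10V N p hp Ω V ∧ (∫ x, |w.1 x| ^ p) = 1 ∧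
  ∀ φ : EucN N → ℝ, IsTestFun Ω φ →
    (∫ x, ‖w.2.1 x‖ ^ (p - 2) * ⟪w.2.1 x, gradient φ x⟫)
      + ε * ∫ x, V x * |w.1 x| ^ (p - 2) * (w.1 x) * φ x
    = lam * ∫ x, |w.1 x| ^ (p - 2) * (w.1 x) * φ x

/-- The embedding `W^{1,p}_0(Ω) ↪ L^p(Ω)` is compact: every bounded sequence in `W^{1,p}_0(Ω)`
has a subsequence converging strongly in `L^p`. -/
def CompactSobolevEmbedding (N : ℕ) (p : ℝ) (hp : 1 ≤ p) (Ω : Set (EucN N)) : Prop :=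
  ∀ w : ℕ → SobPair N (ENNReal.ofReal p), (∀ n, w n ∈ W10 N p hp Ω) →
    (∃ M : ℝ≥0∞, M ≠ ⊤ ∧ ∀ n, eLpNorm (⇑(w n).1) (ENNReal.ofReal p) volume ≤ M ∧
        eLpNorm (⇑(w n).2) (ENNReal.ofReal p) volume ≤ M) →
    ∃ σ : ℕ → ℕ, StrictMono σ ∧ ∃ u : EucN N → ℝ, MemLp u (ENNReal.ofReal p) volume ∧
      Tendsto (fun n => eLpNorm (⇑(w (σ n)).1 - u) (ENNReal.ofReal p) volume) atTop (𝓝 0)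

/-!
Write `E` for the Poincaré constant at infinity. If `lam < E`, then outside a large ball `B_R` the
form `∫ |∇φ|^p` dominates `μ ∫ |φ|^p` for some `μ > lam`. Testing the equation of `u` with
`(η G)^p u`, where `η` cuts off `B_R` and the weight satisfies `|∇G| ≤ α G`, therefore gives
`∫ |G u|^p ≤ K ∫ |u|^p` as soon as `(1 + ε) lam + C(ε) 2^(p-1) α^p < μ`: the gap absorbs both the
eigenvalue and the cost of differentiating the weight. The constant `K` depends on `G` only through
its values on a ball. When `E = ∞`, one may take `μ`, hence `α`, as large as desired.

The same weights leave the Caccioppoli inequalities on superlevel sets intact, so that `G u` is in a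
De Giorgi class. Its supremum is thus controlled by its `L^p` norm, by an iteration which rests on a
Faber–Krahn inequality. Taking for `G` bounded approximations of `exp (α |x|)` and passing to the
limit bounds `u` from above; the lower bound is the upper bound for `-u`.
-/

/-! ### Power inequalities and the duality map of the `p`-norm -/

section PowerInequalities

variable {p : ℝ}

theorem mul_rpow_sub_one (hp : 0 < p) {a : ℝ} (ha : 0 ≤ a) : a * a ^ (p - 1) = a ^ p := by
  rw [← Real.rpow_one_add' ha (by linarith), add_sub_cancel]

theorem mul_rpow_sub_one_le (hp : 1 < p) {ε a t : ℝ} (hε : 0 < ε) (ha : 0 ≤ a) (ht : 0 ≤ t) :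
    t * a ^ (p - 1) ≤ ε * a ^ p + (1 / ε) ^ (p - 1) * t ^ p := by
  have hp0 : 0 < p := by linarith
  rcases le_total t (ε * a) with hta | hat
  · calc t * a ^ (p - 1) ≤ ε * a * a ^ (p - 1) := by gcongr
      _ = ε * a ^ p := by rw [mul_assoc, mul_rpow_sub_one hp0 ha]
      _ ≤ _ := le_add_of_nonneg_right (by positivity)
  · have ha' : a ≤ 1 / ε * t := by rw [one_div_mul_eq_div, le_div_iff₀' hε]; exact hat
    calc t * a ^ (p - 1) ≤ t * (1 / ε * t) ^ (p - 1) := by gcongr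
      _ = (1 / ε) ^ (p - 1) * t ^ p := by
        rw [Real.mul_rpow (by positivity) ht, ← mul_rpow_sub_one hp0 ht]; ring
      _ ≤ _ := le_add_of_nonneg_left (by positivity)

theorem add_rpow_le_mul_add_rpow (hp : 1 ≤ p) {a b : ℝ} (ha : 0 ≤ a) (hb : 0 ≤ b) :
    (a + b) ^ p ≤ 2 ^ (p - 1) * (a ^ p + b ^ p) := by
  lift a to NNReal using ha
  lift b to NNReal using hb
  exact_mod_cast NNReal.rpow_add_le_mul_rpow_add_rpow a b hp

theorem exists_one_add_rpow_le (hp : 0 < p) {ε : ℝ} (hε : 0 < ε) :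
    ∃ θ > 0, (1 + θ) ^ p ≤ 1 + ε := by
  refine ⟨(1 + ε) ^ (1 / p) - 1, sub_pos.2 (Real.one_lt_rpow (by linarith) (by positivity)), ?_⟩
  rw [add_sub_cancel, ← Real.rpow_mul (by linarith), one_div_mul_cancel hp.ne', Real.rpow_one]

theorem exists_add_rpow_le (hp : 0 < p) {ε : ℝ} (hε : 0 < ε) :
    ∃ C ≥ 0, ∀ a b : ℝ, 0 ≤ a → 0 ≤ b → (a + b) ^ p ≤ (1 + ε) * a ^ p + C * b ^ p := by
  obtain ⟨θ, hθ, hθε⟩ := exists_one_add_rpow_le hp hε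
  refine ⟨(1 / θ + 1) ^ p, by positivity, fun a b ha hb => ?_⟩
  rcases le_total b (θ * a) with hba | hab
  · calc (a + b) ^ p ≤ ((1 + θ) * a) ^ p := by gcongr; linarith
      _ = (1 + θ) ^ p * a ^ p := Real.mul_rpow (by positivity) ha
      _ ≤ (1 + ε) * a ^ p := by gcongr
      _ ≤ _ := le_add_of_nonneg_right (by positivity)
  · have ha' : a ≤ 1 / θ * b := by rw [one_div_mul_eq_div, le_div_iff₀' hθ]; exact hab
    calc (a + b) ^ p ≤ ((1 / θ + 1) * b) ^ p := by gcongr; linarith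
      _ = (1 / θ + 1) ^ p * b ^ p := Real.mul_rpow (by positivity) hb
      _ ≤ _ := le_add_of_nonneg_left (by positivity)

end PowerInequalities

/-- The duality map `a ↦ ‖a‖ ^ (p - 2) • a`, which is the gradient of `a ↦ ‖a‖ ^ p / p`. It
turns a weak gradient into the flux of the `p`-Laplacian and, on `ℝ`, is `t ↦ |t| ^ (p - 2) * t`. -/
def pDual {V : Type*} [NormedAddCommGroup V] [NormedSpace ℝ V] (p : ℝ) (a : V) : V :=
  ‖a‖ ^ (p - 2) • a

namespace pDual

section Normed

variable {V : Type*} [NormedAddCommGroup V] [NormedSpace ℝ V] {p : ℝ}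

theorem norm_eq (hp : 1 < p) (a : V) : ‖pDual p a‖ = ‖a‖ ^ (p - 1) := by
  rw [pDual, norm_smul, Real.norm_of_nonneg (by positivity),
    ← Real.rpow_add_one' (norm_nonneg a) (by linarith)]
  congr 1
  ring

theorem neg (a : V) : pDual p (-a) = -pDual p a := by
  simp only [pDual, norm_neg, smul_neg]

theorem smul (hp : 1 < p) {c : ℝ} (hc : 0 ≤ c) (a : V) :
    pDual p (c • a) = c ^ (p - 1) • pDual p a := by
  have hpow : c ^ (p - 1) = c ^ (p - 2) * c := by
    rw [← Real.rpow_add_one' hc (by linarith)]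
    congr 1
    ring
  rw [pDual, pDual, norm_smul, Real.norm_of_nonneg hc, Real.mul_rpow hc (norm_nonneg a), smul_smul,
    smul_smul, hpow, mul_right_comm]

end Normed

section Inner

variable {V : Type*} [NormedAddCommGroup V] [InnerProductSpace ℝ V] {p : ℝ}

theorem inner_self (hp : 0 < p) (a : V) : ⟪pDual p a, a⟫ = ‖a‖ ^ p := by
  rw [pDual, real_inner_smul_left, real_inner_self_eq_norm_sq, ← Real.rpow_natCast ‖a‖ 2,
    ← Real.rpow_add' (norm_nonneg a) (by push_cast; linarith)]
  congr 1
  push_cast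
  ring

theorem abs_inner_le (hp : 1 < p) (a b : V) : |⟪pDual p a, b⟫| ≤ ‖b‖ * ‖a‖ ^ (p - 1) := by
  rw [mul_comm, ← norm_eq hp]
  exact abs_real_inner_le_norm _ _

theorem abs_inner_le_add (hp : 1 < p) {ε : ℝ} (hε : 0 < ε) (a b : V) :
    |⟪pDual p a, b⟫| ≤ ε * ‖a‖ ^ p + (1 / ε) ^ (p - 1) * ‖b‖ ^ p :=
  (abs_inner_le hp a b).trans (mul_rpow_sub_one_le hp hε (norm_nonneg a) (norm_nonneg b))

theorem exists_norm_add_rpow_le (hp : 1 < p) {ε : ℝ} (hε : 0 < ε) :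
    ∃ C ≥ 0, ∀ a b : V, ‖a + b‖ ^ p ≤ (1 + ε) * (‖a‖ ^ p + p * ⟪pDual p a, b⟫) + C * ‖b‖ ^ p := by
  obtain ⟨s, hs, hsε⟩ : ∃ s > 0, 1 + s ≤ (1 + ε) * (1 - s) :=
    ⟨ε / (2 + ε), by positivity, le_of_eq (by field_simp; ring)⟩
  obtain ⟨C, hC, hadd⟩ := exists_add_rpow_le (p := p) (by linarith) hs
  refine ⟨C + (1 + ε) * (p * (1 / (s / p)) ^ (p - 1)), by positivity, fun a b => ?_⟩
  have hinner : -(s * ‖a‖ ^ p + p * (1 / (s / p)) ^ (p - 1) * ‖b‖ ^ p) ≤ p * ⟪pDual p a, b⟫ := by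
    have h := neg_le_of_abs_le (abs_inner_le_add hp (div_pos hs (by linarith : 0 < p)) a b)
    calc _ = p * -(s / p * ‖a‖ ^ p + (1 / (s / p)) ^ (p - 1) * ‖b‖ ^ p) := by field_simp
      _ ≤ _ := by gcongr
  calc ‖a + b‖ ^ p ≤ (‖a‖ + ‖b‖) ^ p := by gcongr; exact norm_add_le a b
    _ ≤ (1 + s) * ‖a‖ ^ p + C * ‖b‖ ^ p := hadd _ _ (norm_nonneg a) (norm_nonneg b)
    _ ≤ (1 + ε) * (1 - s) * ‖a‖ ^ p + C * ‖b‖ ^ p := by gcongr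
    _ = (1 + ε) * (‖a‖ ^ p + -(s * ‖a‖ ^ p + p * (1 / (s / p)) ^ (p - 1) * ‖b‖ ^ p))
        + (C + (1 + ε) * (p * (1 / (s / p)) ^ (p - 1))) * ‖b‖ ^ p := by ring
    _ ≤ _ := by gcongr

end Inner

end pDual

/-! ### Smooth truncations -/

/-- A smooth convex version of `t ↦ max t 0`: it vanishes for `t ≤ 0`, is `1`-Lipschitz, and is
comparable with `t` for `1 ≤ t`. -/
def smoothPosPart (t : ℝ) : ℝ := t * expNegInvGlue t

namespace smoothPosPart

theorem contDiff {n : ℕ∞} : ContDiff ℝ n smoothPosPart := contDiff_id.mul expNegInvGlue.contDiff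

theorem of_nonpos {t : ℝ} (ht : t ≤ 0) : smoothPosPart t = 0 := by
  rw [smoothPosPart, expNegInvGlue.zero_of_nonpos ht, mul_zero]

theorem of_pos {t : ℝ} (ht : 0 < t) : smoothPosPart t = t * Real.exp (-t⁻¹) := by
  rw [smoothPosPart, expNegInvGlue, if_neg ht.not_ge]

theorem nonneg (t : ℝ) : 0 ≤ smoothPosPart t := by
  rcases le_or_gt t 0 with ht | ht
  · rw [of_nonpos ht]
  · rw [of_pos ht]
    positivity

theorem deriv_of_nonpos {t : ℝ} (ht : t ≤ 0) : deriv smoothPosPart t = 0 :=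
  IsLocalMin.deriv_eq_zero (Eventually.of_forall fun s => by rw [of_nonpos ht]; exact nonneg s)

theorem deriv_of_pos {t : ℝ} (ht : 0 < t) :
    deriv smoothPosPart t = (1 + t⁻¹) * Real.exp (-t⁻¹) := by
  have hderiv : HasDerivAt (fun t : ℝ => t * Real.exp (-t⁻¹))
      (1 * Real.exp (-t⁻¹) + t * (Real.exp (-t⁻¹) * -(-(t ^ 2)⁻¹))) t :=
    (hasDerivAt_id t).mul (hasDerivAt_inv ht.ne').neg.exp
  have heq : smoothPosPart =ᶠ[𝓝 t] fun t : ℝ => t * Real.exp (-t⁻¹) :=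
    (lt_mem_nhds ht).mono fun s hs => of_pos hs
  rw [heq.deriv_eq, hderiv.deriv]
  field_simp

theorem deriv_nonneg (t : ℝ) : 0 ≤ deriv smoothPosPart t := by
  rcases le_or_gt t 0 with ht | ht
  · rw [deriv_of_nonpos ht]
  · rw [deriv_of_pos ht]
    positivity

theorem deriv_le_one (t : ℝ) : deriv smoothPosPart t ≤ 1 := by
  rcases le_or_gt t 0 with ht | ht
  · rw [deriv_of_nonpos ht]
    exact zero_le_one
  · rw [deriv_of_pos ht, Real.exp_neg, ← div_eq_mul_inv, div_le_one (Real.exp_pos _), add_comm]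
    exact Real.add_one_le_exp t⁻¹

theorem le_mul_deriv (t : ℝ) : smoothPosPart t ≤ t * deriv smoothPosPart t := by
  rcases le_or_gt t 0 with ht | ht
  · rw [deriv_of_nonpos ht, of_nonpos ht, mul_zero]
  · rw [of_pos ht, deriv_of_pos ht]
    gcongr
    exact le_mul_of_one_le_left (Real.exp_pos _).le (le_add_of_nonneg_right (by positivity))

theorem exp_neg_one_mul_le {t : ℝ} (ht : 1 ≤ t) : Real.exp (-1) * t ≤ smoothPosPart t := by
  rw [of_pos (zero_lt_one.trans_le ht), mul_comm]
  gcongr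
  exact inv_le_one_of_one_le₀ ht

end smoothPosPart

/-- A smooth version of `t ↦ max (t - k) 0`, obtained from `smoothPosPart` by rescaling so that
the transition takes place in `[k, k + w]`. -/
def smoothTrunc (k w t : ℝ) : ℝ := w * smoothPosPart ((t - k) / w)

namespace smoothTrunc

variable {k w : ℝ}

theorem contDiff {n : ℕ∞} : ContDiff ℝ n (smoothTrunc k w) :=
  contDiff_const.mul (smoothPosPart.contDiff.comp ((contDiff_id.sub contDiff_const).div_const w))

theorem deriv_eq (hw : 0 < w) (t : ℝ) :
    deriv (smoothTrunc k w) t = deriv smoothPosPart ((t - k) / w) := by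
  have hinner : HasDerivAt (fun t : ℝ => (t - k) / w) (1 / w) t :=
    ((hasDerivAt_id t).sub_const k).div_const w
  have houter : HasDerivAt smoothPosPart (deriv smoothPosPart ((t - k) / w)) ((t - k) / w) :=
    (smoothPosPart.contDiff.differentiable one_ne_zero).differentiableAt.hasDerivAt
  have hcomp := houter.comp t hinner
  exact (hcomp.const_mul w).deriv.trans (by field_simp)

theorem of_le (hw : 0 < w) {t : ℝ} (ht : t ≤ k) : smoothTrunc k w t = 0 := by
  rw [smoothTrunc, smoothPosPart.of_nonpos (div_nonpos_of_nonpos_of_nonneg (by linarith) hw.le),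
    mul_zero]

theorem deriv_of_le (hw : 0 < w) {t : ℝ} (ht : t ≤ k) : deriv (smoothTrunc k w) t = 0 := by
  rw [deriv_eq hw,
    smoothPosPart.deriv_of_nonpos (div_nonpos_of_nonpos_of_nonneg (by linarith) hw.le)]

theorem nonneg (hw : 0 < w) (t : ℝ) : 0 ≤ smoothTrunc k w t :=
  mul_nonneg hw.le (smoothPosPart.nonneg _)

theorem deriv_nonneg (hw : 0 < w) (t : ℝ) : 0 ≤ deriv (smoothTrunc k w) t := by
  rw [deriv_eq hw]
  exact smoothPosPart.deriv_nonneg _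

theorem deriv_le_one (hw : 0 < w) (t : ℝ) : deriv (smoothTrunc k w) t ≤ 1 := by
  rw [deriv_eq hw]
  exact smoothPosPart.deriv_le_one _

theorem abs_deriv_le_one (hw : 0 < w) (t : ℝ) : |deriv (smoothTrunc k w) t| ≤ 1 := by
  rw [abs_of_nonneg (deriv_nonneg hw t)]
  exact deriv_le_one hw t

theorem le_abs_mul_deriv (hk : 0 ≤ k) (hw : 0 < w) (t : ℝ) :
    smoothTrunc k w t ≤ |t| * deriv (smoothTrunc k w) t := by
  rcases le_or_gt t k with ht | ht
  · rw [of_le hw ht, deriv_of_le hw ht, mul_zero]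
  · have hd := smoothPosPart.deriv_nonneg ((t - k) / w)
    rw [deriv_eq hw, abs_of_pos (by linarith)]
    calc w * smoothPosPart ((t - k) / w)
        ≤ w * ((t - k) / w * deriv smoothPosPart ((t - k) / w)) := by
          gcongr
          exact smoothPosPart.le_mul_deriv _
      _ = (t - k) * deriv smoothPosPart ((t - k) / w) := by field_simp
      _ ≤ t * deriv smoothPosPart ((t - k) / w) := by gcongr; linarith

theorem le_abs (hk : 0 ≤ k) (hw : 0 < w) (t : ℝ) : smoothTrunc k w t ≤ |t| :=
  (le_abs_mul_deriv hk hw t).trans (mul_le_of_le_one_right (abs_nonneg t) (deriv_le_one hw t))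

theorem le_mul_smoothTrunc {h t : ℝ} (hk : 0 ≤ k) (hkh : k < h) (hht : h ≤ t) :
    t ≤ Real.exp 1 * (h / (h - k)) * smoothTrunc k (h - k) t := by
  have hw : 0 < h - k := sub_pos.2 hkh
  have hh : 0 ≤ h := hk.trans hkh.le
  calc t ≤ h / (h - k) * (t - k) := by
        rw [div_mul_eq_mul_div, le_div_iff₀ hw]
        nlinarith
    _ = Real.exp 1 * (h / (h - k)) * ((h - k) * (Real.exp (-1) * ((t - k) / (h - k)))) := by
        rw [Real.exp_neg]
        field_simp
    _ ≤ _ := by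
        unfold smoothTrunc
        gcongr
        exact smoothPosPart.exp_neg_one_mul_le ((one_le_div hw).2 (by linarith))

end smoothTrunc

/-! ### Convergence and pairings in `L^p` -/

section Lp

variable {α E F : Type*} [MeasurableSpace α] {μ : Measure α} [NormedAddCommGroup E]
  [NormedAddCommGroup F]

theorem integrable_norm_rpow_of_memLp {p : ℝ} (hp : 0 < p) {f : α → E}
    (hf : MemLp f (ENNReal.ofReal p) μ) : Integrable (fun x => ‖f x‖ ^ p) μ := by
  have h := hf.integrable_norm_rpow (ENNReal.ofReal_pos.2 hp).ne' ENNReal.ofReal_ne_top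
  rwa [ENNReal.toReal_ofReal hp.le] at h

theorem tendsto_eLpNorm_zero_of_norm_le_mul {ι : Type*} {l : Filter ι} {q : ℝ≥0∞}
    {f : ι → α → E} {h : ι → α → F} {L : ℝ} (hle : ∀ n, ∀ᵐ x ∂μ, ‖f n x‖ ≤ L * ‖h n x‖)
    (hh : Tendsto (fun n => eLpNorm (h n) q μ) l (𝓝 0)) :
    Tendsto (fun n => eLpNorm (f n) q μ) l (𝓝 0) := by
  have hlim := ENNReal.Tendsto.const_mul hh (Or.inr (ENNReal.ofReal_ne_top (r := L)))
  rw [mul_zero] at hlim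
  exact tendsto_of_tendsto_of_tendsto_of_le_of_le tendsto_const_nhds hlim (fun _ => zero_le)
    fun n => eLpNorm_le_mul_eLpNorm_of_ae_le_mul (hle n) q

theorem tendsto_eLpNorm_add_zero {ι : Type*} {l : Filter ι} {q : ℝ≥0∞} (hq : 1 ≤ q)
    {f g : ι → α → E} (hf : ∀ n, AEStronglyMeasurable (f n) μ)
    (hg : ∀ n, AEStronglyMeasurable (g n) μ)
    (hf0 : Tendsto (fun n => eLpNorm (f n) q μ) l (𝓝 0))
    (hg0 : Tendsto (fun n => eLpNorm (g n) q μ) l (𝓝 0)) :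
    Tendsto (fun n => eLpNorm (f n + g n) q μ) l (𝓝 0) := by
  have hlim := hf0.add hg0
  rw [add_zero] at hlim
  exact tendsto_of_tendsto_of_tendsto_of_le_of_le tendsto_const_nhds hlim (fun _ => zero_le)
    fun n => eLpNorm_add_le (hf n) (hg n) hq

theorem tendsto_eLpNorm_zero_of_dominated {q : ℝ≥0∞} (hq0 : q ≠ 0) (hq : q ≠ ⊤)
    {f : ℕ → α → E} {b : α → ℝ} (hf : ∀ n, AEStronglyMeasurable (f n) μ) (hb : MemLp b q μ)
    (hle : ∀ n, ∀ᵐ x ∂μ, ‖f n x‖ ≤ b x)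
    (hlim : ∀ᵐ x ∂μ, Tendsto (fun n => f n x) atTop (𝓝 0)) :
    Tendsto (fun n => eLpNorm (f n) q μ) atTop (𝓝 0) := by
  have hr : 0 < q.toReal := ENNReal.toReal_pos hq0 hq
  have hint : Tendsto (fun n => ∫⁻ x, ‖f n x‖ₑ ^ q.toReal ∂μ) atTop (𝓝 (∫⁻ _, 0 ∂μ)) := by
    refine tendsto_lintegral_of_dominated_convergence' (fun x => ‖b x‖ₑ ^ q.toReal)
      (fun n => (hf n).enorm.pow_const _) (fun n => ?_)
      ((eLpNorm_lt_top_iff_lintegral_rpow_enorm_lt_top hq0 hq).1 hb.2).ne ?_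
    · filter_upwards [hle n] with x hx
      exact ENNReal.rpow_le_rpow (enorm_le_iff_norm_le.2 (hx.trans (le_abs_self _))) hr.le
    · filter_upwards [hlim] with x hx
      have h := (ENNReal.continuous_rpow_const (y := q.toReal)).tendsto _ |>.comp hx.enorm
      rwa [enorm_zero, ENNReal.zero_rpow_of_pos hr] at h
  have hroot := (ENNReal.continuous_rpow_const (y := 1 / q.toReal)).tendsto _ |>.comp hint
  rw [lintegral_zero, ENNReal.zero_rpow_of_pos (by positivity)] at hroot
  exact hroot.congr fun n => (eLpNorm_eq_lintegral_rpow_enorm_toReal hq0 hq).symm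

end Lp

namespace pDual

variable {α V : Type*} [MeasurableSpace α] {μ : Measure α} [NormedAddCommGroup V]
  [InnerProductSpace ℝ V] {p : ℝ}

theorem aestronglyMeasurable_comp {f : α → V} (hf : AEStronglyMeasurable f μ) :
    AEStronglyMeasurable (fun x => pDual p (f x)) μ :=
  (hf.norm.aemeasurable.pow_const _).aestronglyMeasurable.smul hf

theorem memLp_comp (hp : 1 < p) {f : α → V} (hf : MemLp f (ENNReal.ofReal p) μ) :
    MemLp (fun x => pDual p (f x)) (ENNReal.ofReal (p / (p - 1))) μ := by
  have h := hf.norm_rpow_div (ENNReal.ofReal (p - 1))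
  rw [← ENNReal.ofReal_div_of_pos (by linarith), ENNReal.toReal_ofReal (by linarith)] at h
  refine h.mono (aestronglyMeasurable_comp hf.1) (Eventually.of_forall fun x => ?_)
  rw [norm_eq hp, Real.norm_of_nonneg (by positivity)]

theorem integrable_inner (hp : 1 < p) {f h : α → V} (hf : MemLp f (ENNReal.ofReal p) μ)
    (hh : MemLp h (ENNReal.ofReal p) μ) : Integrable (fun x => ⟪pDual p (f x), h x⟫) μ :=
  (((integrable_norm_rpow_of_memLp (by linarith) hf).const_mul 1).add
    ((integrable_norm_rpow_of_memLp (by linarith) hh).const_mul ((1 / 1) ^ (p - 1)))).mono'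
    ((aestronglyMeasurable_comp hf.1).inner hh.1)
    (Eventually.of_forall fun x => abs_inner_le_add hp one_pos (f x) (h x))

theorem tendsto_integral_inner (hp : 1 < p) {f h : α → V} {hn : ℕ → α → V}
    (hf : MemLp f (ENNReal.ofReal p) μ) (hh : MemLp h (ENNReal.ofReal p) μ)
    (hhn : ∀ n, MemLp (hn n) (ENNReal.ofReal p) μ)
    (hlim : Tendsto (fun n => eLpNorm (hn n - h) (ENNReal.ofReal p) μ) atTop (𝓝 0)) :
    Tendsto (fun n => ∫ x, ⟪pDual p (f x), hn n x⟫ ∂μ) atTop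
      (𝓝 (∫ x, ⟪pDual p (f x), h x⟫ ∂μ)) := by
  have hconj : HolderConjugate (ENNReal.ofReal (p / (p - 1))) (ENNReal.ofReal p) :=
    (Real.HolderConjugate.conjExponent hp).symm.ennrealOfReal
  have hf' := memLp_comp hp hf
  refine tendsto_integral_of_L1' _ (integrable_inner hp hf hh).1
    (Eventually.of_forall fun n => integrable_inner hp hf (hhn n)) ?_
  have hprod := ENNReal.Tendsto.const_mul hlim (Or.inr hf'.2.ne)
  rw [mul_zero] at hprod
  refine tendsto_of_tendsto_of_tendsto_of_le_of_le tendsto_const_nhds hprod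
    (fun _ => zero_le) fun n => ?_
  have hHolder := eLpNorm_le_eLpNorm_mul_eLpNorm_of_nnnorm (p := ENNReal.ofReal (p / (p - 1)))
    (q := ENNReal.ofReal p) (r := 1) hf'.1 ((hhn n).1.sub hh.1) (fun a b => ⟪a, b⟫) 1
    (Eventually.of_forall fun x => by
      simpa only [one_mul] using nnnorm_inner_le_nnnorm (𝕜 := ℝ) (pDual p (f x)) _)
  rw [ENNReal.coe_one, one_mul] at hHolder
  refine le_trans (le_of_eq ?_) hHolder
  congr 1
  ext x
  simp only [Pi.sub_apply, inner_sub_right]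

end pDual

/-! ### Gradients -/

section Gradient

variable {V : Type*} [NormedAddCommGroup V] [InnerProductSpace ℝ V] [CompleteSpace V]
  {f g : V → ℝ} {x : V}

theorem norm_gradient (f : V → ℝ) (x : V) : ‖gradient f x‖ = ‖fderiv ℝ f x‖ :=
  LinearIsometryEquiv.norm_map _ _

theorem gradient_fun_mul (hf : DifferentiableAt ℝ f x) (hg : DifferentiableAt ℝ g x) :
    gradient (fun y => f y * g y) x = f x • gradient g x + g x • gradient f x := by
  simp only [gradient, fderiv_fun_mul hf hg, map_add, map_smul]

theorem gradient_comp {F : ℝ → ℝ} (hF : DifferentiableAt ℝ F (f x))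
    (hf : DifferentiableAt ℝ f x) :
    gradient (fun y => F (f y)) x = deriv F (f x) • gradient f x := by
  have h : HasFDerivAt (fun y => F (f y)) (deriv F (f x) • fderiv ℝ f x) x :=
    hF.hasDerivAt.comp_hasFDerivAt x hf.hasFDerivAt
  simp only [gradient, h.fderiv, map_smul]

theorem continuous_gradient (hf : ContDiff ℝ 1 f) : Continuous (gradient f) :=
  (InnerProductSpace.toDual ℝ V).symm.continuous.comp (hf.continuous_fderiv one_ne_zero)

theorem hasCompactSupport_gradient (hf : HasCompactSupport f) : HasCompactSupport (gradient f) :=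
  hf.fderiv (𝕜 := ℝ) |>.comp_left (g := (InnerProductSpace.toDual ℝ V).symm) (map_zero _)

end Gradient

/-! ### The space `W^{1,p}_0` at the level of functions -/

section TestFunctions

variable {N : ℕ} {Ω : Set (EucN N)} {φ : EucN N → ℝ}

namespace IsTestFun

theorem differentiable (hφ : IsTestFun Ω φ) : Differentiable ℝ φ :=
  hφ.1.differentiable (by simp)

theorem contDiff_one (hφ : IsTestFun Ω φ) : ContDiff ℝ 1 φ := hφ.1.of_le (by exact_mod_cast le_top)

theorem memLp (hφ : IsTestFun Ω φ) (q : ℝ≥0∞) : MemLp φ q volume :=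
  hφ.1.continuous.memLp_of_hasCompactSupport hφ.2.1

theorem memLp_gradient (hφ : IsTestFun Ω φ) (q : ℝ≥0∞) : MemLp (gradient φ) q volume :=
  (continuous_gradient hφ.contDiff_one).memLp_of_hasCompactSupport
    (hasCompactSupport_gradient hφ.2.1)

theorem mul_left (hφ : IsTestFun Ω φ) {Ω' : Set (EucN N)} {A : EucN N → ℝ}
    (hA : ContDiff ℝ (⊤ : ℕ∞) A) (hsupp : tsupport A ∩ Ω ⊆ Ω') :
    IsTestFun Ω' fun x => A x * φ x :=
  ⟨hA.mul hφ.1, hφ.2.1.mul_left, (subset_inter tsupport_mul_subset_left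
    (tsupport_mul_subset_right.trans hφ.2.2)).trans hsupp⟩

theorem comp (hφ : IsTestFun Ω φ) {F : ℝ → ℝ} (hF : ContDiff ℝ (⊤ : ℕ∞) F) (hF0 : F 0 = 0) :
    IsTestFun Ω fun x => F (φ x) := by
  refine ⟨hF.comp hφ.1, hφ.2.1.comp_left hF0, (closure_mono fun x => mt fun hx => ?_).trans hφ.2.2⟩
  simp only [hx, hF0]

end IsTestFun

end TestFunctions

/-- `u` belongs to `W^{1,p}_0(Ω)` and has weak gradient `g`. This is membership in `W10` for
functions instead of classes of functions, the closure being expressed by sequences. -/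
structure MemW10 {N : ℕ} (p : ℝ) (Ω : Set (EucN N)) (u : EucN N → ℝ) (g : EucN N → EucN N) :
    Prop where
  memLp : MemLp u (ENNReal.ofReal p) volume
  memLp_grad : MemLp g (ENNReal.ofReal p) volume
  exists_tendsto : ∃ φ : ℕ → EucN N → ℝ, (∀ n, IsTestFun Ω (φ n)) ∧
    Tendsto (fun n => eLpNorm (φ n - u) (ENNReal.ofReal p) volume) atTop (𝓝 0) ∧
    Tendsto (fun n => eLpNorm (gradient (φ n) - g) (ENNReal.ofReal p) volume) atTop (𝓝 0)

namespace MemW10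

variable {N : ℕ} {p : ℝ} {Ω Ω' : Set (EucN N)} {u : EucN N → ℝ} {g : EucN N → EucN N}

theorem of_mem_W10 {hp : 1 ≤ p} {w : SobPair N (ENNReal.ofReal p)} (hw : w ∈ W10 N p hp Ω) :
    MemW10 p Ω w.1 w.2 := by
  have := fact_one_le_ofReal hp
  obtain ⟨x, hx, hlim⟩ := mem_closure_iff_seq_limit.1 hw
  choose φ hφ hfst hsnd using hx
  refine ⟨Lp.memLp _, Lp.memLp _, φ, hφ, ?_, ?_⟩
  · exact ((Lp.tendsto_Lp_iff_tendsto_eLpNorm' _ _).1 ((continuous_fst.tendsto w).comp hlim)).congr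
      fun n => eLpNorm_congr_ae ((hfst n).sub (ae_eq_refl _))
  · exact ((Lp.tendsto_Lp_iff_tendsto_eLpNorm' _ _).1 ((continuous_snd.tendsto w).comp hlim)).congr
      fun n => eLpNorm_congr_ae ((hsnd n).sub (ae_eq_refl _))

theorem toLp_mem_W10 {hp : 1 ≤ p} (h : MemW10 p Ω u g) :
    ((h.memLp.toLp u, h.memLp_grad.toLp g) : SobPair N (ENNReal.ofReal p)) ∈ W10 N p hp Ω := by
  have := fact_one_le_ofReal hp
  obtain ⟨φ, hφ, hlim, hlim'⟩ := h.exists_tendsto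
  refine mem_closure_iff_seq_limit.2
    ⟨fun n => (((hφ n).memLp _).toLp (φ n), ((hφ n).memLp_gradient _).toLp (gradient (φ n))),
      fun n => ⟨φ n, hφ n, ((hφ n).memLp _).coeFn_toLp, ((hφ n).memLp_gradient _).coeFn_toLp⟩,
      Tendsto.prodMk_nhds ?_ ?_⟩
  · exact (Lp.tendsto_Lp_iff_tendsto_eLpNorm' _ _).2 <| hlim.congr fun n =>
      eLpNorm_congr_ae ((MemLp.coeFn_toLp _).sub (MemLp.coeFn_toLp _)).symm
  · exact (Lp.tendsto_Lp_iff_tendsto_eLpNorm' _ _).2 <| hlim'.congr fun n =>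
      eLpNorm_congr_ae ((MemLp.coeFn_toLp _).sub (MemLp.coeFn_toLp _)).symm

theorem integrable_abs_rpow (h : MemW10 p Ω u g) (hp : 0 < p) : Integrable fun x => |u x| ^ p :=
  integrable_norm_rpow_of_memLp hp h.memLp

theorem exists_tendsto_ae (h : MemW10 p Ω u g) (hp : 0 < p) :
    ∃ φ : ℕ → EucN N → ℝ, (∀ n, IsTestFun Ω (φ n)) ∧
      Tendsto (fun n => eLpNorm (φ n - u) (ENNReal.ofReal p) volume) atTop (𝓝 0) ∧
      Tendsto (fun n => eLpNorm (gradient (φ n) - g) (ENNReal.ofReal p) volume) atTop (𝓝 0) ∧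
      ∀ᵐ x, Tendsto (fun n => φ n x) atTop (𝓝 (u x)) := by
  obtain ⟨φ, hφ, hlim, hlim'⟩ := h.exists_tendsto
  obtain ⟨σ, hσ, hae⟩ := (tendstoInMeasure_of_tendsto_eLpNorm (ENNReal.ofReal_pos.2 hp).ne'
    (fun n => ((hφ n).memLp (ENNReal.ofReal p)).1) h.memLp.1 hlim).exists_seq_tendsto_ae
  exact ⟨fun n => φ (σ n), fun n => hφ _, hlim.comp hσ.tendsto_atTop,
    hlim'.comp hσ.tendsto_atTop, hae⟩

theorem mul (h : MemW10 p Ω u g) (hp : 1 ≤ p) {A : EucN N → ℝ} (hA : ContDiff ℝ (⊤ : ℕ∞) A)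
    {L L' : ℝ} (hL : ∀ x, |A x| ≤ L) (hL' : ∀ x, ‖gradient A x‖ ≤ L')
    (hsupp : tsupport A ∩ Ω ⊆ Ω') :
    MemW10 p Ω' (fun x => A x * u x) (fun x => A x • g x + u x • gradient A x) := by
  obtain ⟨φ, hφ, hlim, hlim'⟩ := h.exists_tendsto
  have hA' : Continuous (gradient A) := continuous_gradient (hA.of_le (by exact_mod_cast le_top))
  have hsmul {E : Type} [NormedAddCommGroup E] [NormedSpace ℝ E] (y : E) (x : EucN N) :
      ‖A x • y‖ ≤ L * ‖y‖ := by
    rw [norm_smul]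
    exact mul_le_mul_of_nonneg_right (hL x) (norm_nonneg y)
  have hsmul' (t : ℝ) (x : EucN N) : ‖t • gradient A x‖ ≤ L' * ‖t‖ := by
    rw [norm_smul, mul_comm]
    exact mul_le_mul_of_nonneg_right (hL' x) (norm_nonneg t)
  have hAu := h.memLp.of_le_mul (hA.continuous.aestronglyMeasurable.smul h.memLp.1)
    (ae_of_all _ fun x => hsmul (u x) x)
  have hAg := h.memLp_grad.of_le_mul (hA.continuous.aestronglyMeasurable.smul h.memLp_grad.1)
    (ae_of_all _ fun x => hsmul (g x) x)
  have hA'u := h.memLp.of_le_mul (h.memLp.1.smul hA'.aestronglyMeasurable)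
    (ae_of_all _ fun x => hsmul' (u x) x)
  refine ⟨hAu, hAg.add hA'u, fun n x => A x * φ n x, fun n => (hφ n).mul_left hA hsupp, ?_, ?_⟩
  · refine tendsto_eLpNorm_zero_of_norm_le_mul (L := L) (fun n => ae_of_all _ fun x => ?_) hlim
    simpa only [Pi.sub_apply, smul_eq_mul, mul_sub] using hsmul (φ n x - u x) x
  · have hsub (n : ℕ) : (gradient (fun x => A x * φ n x) - fun x => A x • g x + u x • gradient A x)
        = (fun x => A x • (gradient (φ n) - g) x) + fun x => (φ n - u) x • gradient A x := by
      ext1 x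
      simp only [Pi.sub_apply, Pi.add_apply]
      rw [gradient_fun_mul (hA.differentiable (by simp) x) ((hφ n).differentiable x)]
      module
    simp only [hsub]
    exact tendsto_eLpNorm_add_zero (ENNReal.one_le_ofReal.2 hp)
      (fun n => hA.continuous.aestronglyMeasurable.smul
        (((hφ n).memLp_gradient (ENNReal.ofReal p)).1.sub h.memLp_grad.1))
      (fun n => (((hφ n).memLp (ENNReal.ofReal p)).1.sub h.memLp.1).smul hA'.aestronglyMeasurable)
      (tendsto_eLpNorm_zero_of_norm_le_mul (fun n => ae_of_all _ fun x => hsmul _ x) hlim')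
      (tendsto_eLpNorm_zero_of_norm_le_mul (fun n => ae_of_all _ fun x => hsmul' _ x) hlim)

theorem const_mul (h : MemW10 p Ω u g) (hp : 1 ≤ p) (c : ℝ) :
    MemW10 p Ω (fun x => c * u x) (fun x => c • g x) := by
  simpa only [gradient_fun_const, smul_zero, add_zero] using h.mul hp (A := fun _ => c)
    contDiff_const (fun _ => le_rfl) (fun x => (congrArg norm (gradient_fun_const x c)).le)
    inter_subset_right

theorem neg (h : MemW10 p Ω u g) (hp : 1 ≤ p) :
    MemW10 p Ω (fun x => -u x) (fun x => -g x) := by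
  simpa only [neg_one_mul, neg_one_smul] using h.const_mul hp (-1)

end MemW10

theorem tendsto_eLpNorm_comp_sub_smul {X V : Type*} [MeasurableSpace X] {μ : Measure X}
    [NormedAddCommGroup V] [NormedSpace ℝ V] {q : ℝ≥0∞} (hq0 : q ≠ 0) (hq : q ≠ ⊤) {ρ : ℝ → ℝ}
    (hρ : Continuous ρ) {L : ℝ} (hL : ∀ t, |ρ t| ≤ L) {φ : ℕ → X → ℝ} {u : X → ℝ} {g : X → V}
    (hφ : ∀ n, AEStronglyMeasurable (φ n) μ) (hu : AEStronglyMeasurable u μ) (hg : MemLp g q μ)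
    (hae : ∀ᵐ x ∂μ, Tendsto (fun n => φ n x) atTop (𝓝 (u x))) :
    Tendsto (fun n => eLpNorm (fun x => (ρ (φ n x) - ρ (u x)) • g x) q μ) atTop (𝓝 0) := by
  refine tendsto_eLpNorm_zero_of_dominated hq0 hq (fun n => ((hρ.comp_aestronglyMeasurable
    (hφ n)).sub (hρ.comp_aestronglyMeasurable hu)).smul hg.1) (hg.norm.const_mul (L + L))
    (fun n => ae_of_all _ fun x => ?_) ?_
  · rw [norm_smul]
    exact mul_le_mul_of_nonneg_right
      ((abs_sub _ _).trans (add_le_add (hL _) (hL _))) (norm_nonneg _)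
  · filter_upwards [hae] with x hx
    simpa only [Function.comp_def, sub_self, zero_smul] using
      (((hρ.tendsto _).comp hx).sub_const (ρ (u x))).smul_const (g x)

namespace MemW10

variable {N : ℕ} {p : ℝ} {Ω : Set (EucN N)} {u : EucN N → ℝ} {g : EucN N → EucN N}

theorem comp (h : MemW10 p Ω u g) (hp : 1 ≤ p) {F : ℝ → ℝ} (hF : ContDiff ℝ (⊤ : ℕ∞) F)
    (hF0 : F 0 = 0) (hL : ∀ t, |deriv F t| ≤ 1) :
    MemW10 p Ω (fun x => F (u x)) (fun x => deriv F (u x) • g x) := by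
  obtain ⟨φ, hφ, hlim, hlim', hae⟩ := h.exists_tendsto_ae (by linarith)
  have hF' : Continuous (deriv F) := hF.continuous_deriv (by simp)
  have hlip (s t : ℝ) : |F s - F t| ≤ |s - t| := by
    simpa only [Real.norm_eq_abs, one_mul] using convex_univ.norm_image_sub_le_of_norm_deriv_le
      (fun t _ => hF.differentiable (by simp) t) (fun t _ => hL t) (mem_univ t) (mem_univ s)
  have hsmul (t : ℝ) (y : EucN N) : ‖deriv F t • y‖ ≤ ‖y‖ := by
    rw [norm_smul]
    exact mul_le_of_le_one_left (norm_nonneg y) (hL t)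
  have hsmul_meas {f : EucN N → ℝ} {y : EucN N → EucN N} (hf : AEStronglyMeasurable f volume)
      (hy : AEStronglyMeasurable y volume) :
      AEStronglyMeasurable (fun x => deriv F (f x) • y x) volume :=
    (hF'.comp_aestronglyMeasurable hf).smul hy
  refine ⟨h.memLp.mono (hF.continuous.comp_aestronglyMeasurable h.memLp.1)
      (ae_of_all _ fun x => by simpa only [hF0, sub_zero, Real.norm_eq_abs] using hlip (u x) 0),
    h.memLp_grad.mono (hsmul_meas h.memLp.1 h.memLp_grad.1) (ae_of_all _ fun x => hsmul _ _),
    fun n x => F (φ n x), fun n => (hφ n).comp hF hF0, ?_, ?_⟩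
  · exact tendsto_of_tendsto_of_tendsto_of_le_of_le tendsto_const_nhds hlim (fun _ => zero_le)
      fun n => eLpNorm_mono fun x => hlip _ _
  · have hsub (n : ℕ) : (gradient (fun x => F (φ n x)) - fun x => deriv F (u x) • g x)
        = (fun x => deriv F (φ n x) • (gradient (φ n) - g) x)
          + fun x => (deriv F (φ n x) - deriv F (u x)) • g x := by
      ext1 x
      simp only [Pi.sub_apply, Pi.add_apply]
      rw [gradient_comp (hF.differentiable (by simp) _) ((hφ n).differentiable x)]
      module
    have hφ_meas (n : ℕ) := ((hφ n).memLp (ENNReal.ofReal p)).1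
    have hgrad_meas (n : ℕ) :=
      (((hφ n).memLp_gradient (ENNReal.ofReal p)).1.sub h.memLp_grad.1)
    simp only [hsub]
    refine tendsto_eLpNorm_add_zero (ENNReal.one_le_ofReal.2 hp)
      (fun n => hsmul_meas (hφ_meas n) (hgrad_meas n))
      (fun n => ((hF'.comp_aestronglyMeasurable (hφ_meas n)).sub
        (hF'.comp_aestronglyMeasurable h.memLp.1)).smul h.memLp_grad.1) ?_
      (tendsto_eLpNorm_comp_sub_smul (ENNReal.ofReal_pos.2 (by linarith)).ne'
        ENNReal.ofReal_ne_top hF' hL hφ_meas h.memLp.1 h.memLp_grad hae)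
    exact tendsto_of_tendsto_of_tendsto_of_le_of_le tendsto_const_nhds hlim' (fun _ => zero_le)
      fun n => eLpNorm_mono fun x => hsmul _ _

theorem mul_integral_rpow_le (h : MemW10 p Ω u g) (hp : 1 ≤ p) {μ : ℝ}
    (hμ : ENNReal.ofReal μ ≤ lambda1p N p hp Ω) :
    μ * ∫ x, |u x| ^ p ≤ ∫ x, ‖g x‖ ^ p := by
  have hp0 : 0 < p := by linarith
  set s := ∫ x, |u x| ^ p
  have hs0 : 0 ≤ s := integral_nonneg fun x => by positivity
  have hg0 : 0 ≤ ∫ x, ‖g x‖ ^ p := integral_nonneg fun x => by positivity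
  obtain hs' | hs' := hs0.eq_or_lt
  · rwa [← hs', mul_zero]
  have hc0 : 0 ≤ s ^ (-(1 / p)) := by positivity
  have hcp : (s ^ (-(1 / p))) ^ p = s⁻¹ := by
    rw [← Real.rpow_mul hs0, neg_mul, one_div_mul_cancel hp0.ne', Real.rpow_neg_one]
  have hv := h.const_mul hp (s ^ (-(1 / p)))
  have hfst : (∫ x, |hv.memLp.toLp _ x| ^ p) = 1 := by
    rw [integral_congr_ae (g := fun x => s⁻¹ * |u x| ^ p), integral_const_mul,
      inv_mul_cancel₀ hs'.ne']
    filter_upwards [hv.memLp.coeFn_toLp] with x hx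
    rw [hx, abs_mul, abs_of_nonneg hc0, Real.mul_rpow hc0 (abs_nonneg _), hcp]
  have hsnd : (∫ x, ‖hv.memLp_grad.toLp _ x‖ ^ p) = s⁻¹ * ∫ x, ‖g x‖ ^ p := by
    rw [integral_congr_ae (g := fun x => s⁻¹ * ‖g x‖ ^ p), integral_const_mul]
    filter_upwards [hv.memLp_grad.coeFn_toLp] with x hx
    rw [hx, norm_smul, Real.norm_of_nonneg hc0, Real.mul_rpow hc0 (norm_nonneg _), hcp]
  have hle := hμ.trans (sInf_le ⟨_, hv.toLp_mem_W10, hfst, rfl⟩)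
  rwa [hsnd, ENNReal.ofReal_le_ofReal_iff (by positivity), inv_mul_eq_div, le_div_iff₀ hs'] at hle

end MemW10

/-- `u`, with weak gradient `g`, solves `-Δ_p u = lam |u|^{p-2} u` weakly in `Ω` with zero boundary
values. The test functions range over all of `W^{1,p}_0(Ω)`, and `u = 0` is allowed. -/
structure IsEigenpair {N : ℕ} (p : ℝ) (Ω : Set (EucN N)) (lam : ℝ) (u : EucN N → ℝ)
    (g : EucN N → EucN N) : Prop where
  mem : MemW10 p Ω u g
  integral_eq : ∀ φ h, MemW10 p Ω φ h →
    ∫ x, ⟪pDual p (g x), h x⟫ = lam * ∫ x, pDual p (u x) * φ x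

namespace IsEigenpair

variable {N : ℕ} {p lam : ℝ} {Ω : Set (EucN N)}

theorem of_isEigenfunction (hp : 1 < p) {w : SobPair N (ENNReal.ofReal p)}
    (hw : IsEigenfunction N p hp.le Ω lam w) : IsEigenpair p Ω lam w.1 w.2 := by
  obtain ⟨hmem, -, heq⟩ := hw
  have hW := MemW10.of_mem_W10 hmem
  refine ⟨hW, fun φ h ⟨hφ, hh, ψ, hψ, hlim, hlim'⟩ => ?_⟩
  have hgrad := pDual.tendsto_integral_inner hp hW.memLp_grad hh
    (fun n => (hψ n).memLp_gradient _) hlim'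
  have hfun := (pDual.tendsto_integral_inner hp hW.memLp hφ
    (fun n => (hψ n).memLp _) hlim).const_mul lam
  simp only [Real.inner_apply] at hfun
  refine tendsto_nhds_unique hgrad (hfun.congr fun n => ?_)
  simpa only [pDual, real_inner_smul_left, smul_eq_mul, Real.norm_eq_abs] using (heq _ (hψ n)).symm

theorem neg {u : EucN N → ℝ} {g : EucN N → EucN N} (h : IsEigenpair p Ω lam u g) (hp : 1 ≤ p) :
    IsEigenpair p Ω lam (fun x => -u x) (fun x => -g x) := by
  refine ⟨h.mem.neg hp, fun φ k hφ => ?_⟩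
  simp only [pDual.neg, inner_neg_left, neg_mul, integral_neg, h.integral_eq φ k hφ, mul_neg]

end IsEigenpair

/-! ### The Sobolev and Faber-Krahn inequalities -/

theorem eLpNorm_two_le_of_enorm_le {X E : Type*} [MeasurableSpace X] {μ : Measure X}
    [NormedAddCommGroup E] {f : X → E} {M : ℝ≥0∞} (hf : AEStronglyMeasurable f μ)
    (hM : ∀ x, ‖f x‖ₑ ≤ M) (hf1 : eLpNorm f 1 μ ≤ M) : eLpNorm f 2 μ ≤ M := by
  have hsq := eLpNorm_nnreal_pow_eq_lintegral (f := f) (μ := μ) (p := 2) two_ne_zero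
  simp only [ENNReal.coe_ofNat, NNReal.coe_ofNat, ENNReal.rpow_two] at hsq
  rw [← ENNReal.pow_le_pow_left_iff two_ne_zero, hsq]
  calc ∫⁻ x, ‖f x‖ₑ ^ 2 ∂μ ≤ ∫⁻ x, M * ‖f x‖ₑ ∂μ := lintegral_mono fun x => by
        rw [sq]
        exact mul_le_mul_left (hM x) _
    _ = M * eLpNorm f 1 μ := by
        rw [lintegral_const_mul'' _ hf.enorm, eLpNorm_one_eq_lintegral_enorm]
    _ ≤ M ^ 2 := by
        rw [sq]
        exact mul_le_mul_right hf1 M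

theorem enorm_le_eLpNorm_fderiv_of_dim_one {f : EucN 1 → ℝ} (hf : ContDiff ℝ 1 f)
    (hf' : HasCompactSupport f) (x : EucN 1) : ‖f x‖ₑ ≤ eLpNorm (fderiv ℝ f) 1 volume := by
  let e : ℝ ≃ₗᵢ[ℝ] EucN 1 := (OrthonormalBasis.singleton (Fin 1) ℝ).repr
  obtain ⟨t, rfl⟩ := e.surjective x
  have hderiv (s : ℝ) : ‖deriv (f ∘ e) s‖ₑ ≤ ‖fderiv ℝ f (e s)‖ₑ := by
    have h := (hf.differentiable one_ne_zero (e s)).hasFDerivAt.comp_hasDerivAt s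
      e.toContinuousLinearEquiv.toContinuousLinearMap.hasDerivAt
    rw [h.deriv, enorm_le_iff_norm_le]
    simpa using (fderiv ℝ f (e s)).le_opNorm (e 1)
  calc ‖f (e t)‖ₑ ≤ ∫⁻ s in Iic t, ‖deriv (f ∘ e) s‖ₑ :=
        (hf'.comp_homeomorph e.toHomeomorph).enorm_le_lintegral_Ici_deriv (hf.comp e.contDiff) t
    _ ≤ ∫⁻ s, ‖fderiv ℝ f (e s)‖ₑ := (setLIntegral_le_lintegral _ _).trans (lintegral_mono hderiv)
    _ = eLpNorm (fderiv ℝ f) 1 volume := by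
        rw [e.measurePreserving.lintegral_comp_emb e.toHomeomorph.measurableEmbedding
          (fun y => ‖fderiv ℝ f y‖ₑ), eLpNorm_one_eq_lintegral_enorm]

theorem exists_eLpNorm_le_eLpNorm_one_add_fderiv (N : ℕ) : ∃ χ : NNReal, 1 < χ ∧ ∃ C : NNReal,
    ∀ f : EucN N → ℝ, ContDiff ℝ 1 f → HasCompactSupport f →
      eLpNorm f χ volume ≤ C * (eLpNorm f 1 volume + eLpNorm (fderiv ℝ f) 1 volume) := by
  obtain rfl | rfl | hN : N = 0 ∨ N = 1 ∨ 1 < N := by lia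
  · refine ⟨2, one_lt_two, 1, fun f hf _ => ?_⟩
    have hle (x : EucN 0) : ‖f x‖ₑ ≤ eLpNorm f 1 volume := by
      rw [eLpNorm_one_eq_lintegral_enorm, volume_euclideanSpace_eq_dirac, lintegral_dirac,
        Subsingleton.elim x 0]
    rw [ENNReal.coe_one, one_mul]
    exact (eLpNorm_two_le_of_enorm_le hf.continuous.aestronglyMeasurable hle le_rfl).trans
      le_self_add
  · refine ⟨2, one_lt_two, 1, fun f hf hf' => ?_⟩
    rw [ENNReal.coe_one, one_mul]
    exact eLpNorm_two_le_of_enorm_le hf.continuous.aestronglyMeasurable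
      (fun x => (enorm_le_eLpNorm_fderiv_of_dim_one hf hf' x).trans le_add_self) le_self_add
  · have hconj : NNReal.HolderConjugate (N : NNReal) (N : NNReal).conjExponent :=
      NNReal.HolderConjugate.conjExponent (by exact_mod_cast hN)
    refine ⟨_, hconj.symm.lt, eLpNormLESNormFDerivOneConst (volume : Measure (EucN N)) _,
      fun f hf hf' => (eLpNorm_le_eLpNorm_fderiv_one volume hf hf' ?_).trans
        (mul_le_mul_right le_add_self _)⟩
    rwa [finrank_euclideanSpace_fin]

theorem eLpNorm_fderiv_norm_rpow_le {V : Type*} [NormedAddCommGroup V] [InnerProductSpace ℝ V]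
    [CompleteSpace V] [MeasurableSpace V] [BorelSpace V] [SecondCountableTopology V]
    {μ : Measure V} {p : ℝ} (hp : 1 < p) {f : V → ℝ} (hf : ContDiff ℝ 1 f) :
    eLpNorm (fderiv ℝ fun x => ‖f x‖ ^ p) 1 μ ≤ ENNReal.ofReal p *
      (eLpNorm f (ENNReal.ofReal p) μ ^ p + eLpNorm (gradient f) (ENNReal.ofReal p) μ ^ p) := by
  have hp0 : 0 < p := by linarith
  have hpt (x : V) : ‖fderiv ℝ (fun x => ‖f x‖ ^ p) x‖
      ≤ p * ‖‖f x‖ ^ p + ‖gradient f x‖ ^ p‖ := by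
    refine (norm_fderiv_norm_rpow_le (hf.differentiable one_ne_zero) hp).trans ?_
    have h := mul_rpow_sub_one_le hp one_pos (norm_nonneg (f x)) (norm_nonneg (gradient f x))
    rw [one_mul, one_div_one, Real.one_rpow, one_mul] at h
    rw [← norm_gradient, mul_assoc, mul_comm (_ ^ _),
      Real.norm_of_nonneg (r := _ + _) (by positivity)]
    exact mul_le_mul_of_nonneg_left h hp0.le
  refine (eLpNorm_le_mul_eLpNorm_of_ae_le_mul (ae_of_all _ hpt) 1).trans ?_
  rw [← one_mul (ENNReal.ofReal p), ← eLpNorm_norm_rpow f hp0, ← eLpNorm_norm_rpow _ hp0, one_mul]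
  refine mul_le_mul_right (eLpNorm_add_le ?_ ?_ le_rfl) _
  · exact (hf.continuous.norm.rpow_const fun _ => .inr hp0.le).aestronglyMeasurable
  · exact ((continuous_gradient hf).norm.rpow_const fun _ => .inr hp0.le).aestronglyMeasurable

theorem exists_eLpNorm_le_add_gradient (N : ℕ) {p : ℝ} (hp : 1 < p) :
    ∃ χ : NNReal, 1 < χ ∧ ∃ C : NNReal, ∀ f : EucN N → ℝ, ContDiff ℝ 1 f → HasCompactSupport f →
      eLpNorm f (χ * ENNReal.ofReal p) volume ≤
        C * (eLpNorm f (ENNReal.ofReal p) volume +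
          eLpNorm (gradient f) (ENNReal.ofReal p) volume) := by
  obtain ⟨χ, hχ, C, hC⟩ := exists_eLpNorm_le_eLpNorm_one_add_fderiv N
  have hp0 : 0 < p := by linarith
  refine ⟨χ, hχ, (C * (1 + p.toNNReal)) ^ (1 / p), fun f hf hf' => ?_⟩
  set a := eLpNorm f (ENNReal.ofReal p) volume
  set b := eLpNorm (gradient f) (ENNReal.ofReal p) volume
  have hpow : eLpNorm f (χ * ENNReal.ofReal p) volume ^ p
      ≤ ↑(C * (1 + p.toNNReal)) * (a ^ p + b ^ p) := by
    have h := hC (fun x => ‖f x‖ ^ p) (hf.norm_rpow hp) (hf'.comp_left (g := fun t => ‖t‖ ^ p)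
      (by rw [norm_zero, Real.zero_rpow hp0.ne']))
    rw [eLpNorm_norm_rpow _ hp0, eLpNorm_norm_rpow _ hp0, one_mul] at h
    rw [ENNReal.coe_mul, ENNReal.coe_add, ENNReal.coe_one, mul_assoc, add_mul, one_mul]
    exact h.trans (mul_le_mul_right
      (add_le_add le_self_add (eLpNorm_fderiv_norm_rpow_le hp hf)) _)
  rw [← ENNReal.le_rpow_inv_iff hp0, ENNReal.mul_rpow_of_nonneg _ _ (by positivity),
    ← one_div, ← ENNReal.coe_rpow_of_nonneg _ (by positivity)] at hpow
  exact hpow.trans (mul_le_mul_right (ENNReal.rpow_add_rpow_le_add a b hp.le) _)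

theorem tendsto_eLpNorm_of_tendsto_eLpNorm_sub {X E : Type*} [MeasurableSpace X] {μ : Measure X}
    [NormedAddCommGroup E] {q : ℝ≥0∞} (hq : 1 ≤ q) {f : X → E} {fn : ℕ → X → E}
    (hfn : ∀ n, MemLp (fn n) q μ) (hf : MemLp f q μ)
    (hlim : Tendsto (fun n => eLpNorm (fn n - f) q μ) atTop (𝓝 0)) :
    Tendsto (fun n => eLpNorm (fn n) q μ) atTop (𝓝 (eLpNorm f q μ)) := by
  have : Fact (1 ≤ q) := ⟨hq⟩
  have h := ((Lp.tendsto_Lp_iff_tendsto_eLpNorm'' fn hfn f hf).2 hlim).enorm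
  simpa only [Lp.enorm_toLp] using h

theorem exists_memW10_eLpNorm_le (N : ℕ) {p : ℝ} (hp : 1 < p) :
    ∃ χ : NNReal, 1 < χ ∧ ∃ C : NNReal, ∀ (Ω : Set (EucN N)) (u : EucN N → ℝ)
      (g : EucN N → EucN N), MemW10 p Ω u g → eLpNorm u (χ * ENNReal.ofReal p) volume ≤
        C * (eLpNorm u (ENNReal.ofReal p) volume + eLpNorm g (ENNReal.ofReal p) volume) := by
  obtain ⟨χ, hχ, C, hC⟩ := exists_eLpNorm_le_add_gradient N hp
  refine ⟨χ, hχ, C, fun Ω u g h => ?_⟩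
  obtain ⟨φ, hφ, hlim, hlim', hae⟩ := h.exists_tendsto_ae (by linarith)
  have hq : 1 ≤ ENNReal.ofReal p := ENNReal.one_le_ofReal.2 hp.le
  have hbound := ENNReal.Tendsto.const_mul
    ((tendsto_eLpNorm_of_tendsto_eLpNorm_sub hq (fun n => (hφ n).memLp _) h.memLp hlim).add
      (tendsto_eLpNorm_of_tendsto_eLpNorm_sub hq (fun n => (hφ n).memLp_gradient _)
        h.memLp_grad hlim')) (Or.inr (ENNReal.coe_ne_top (r := C)))
  rw [← hbound.liminf_eq]
  exact (Lp.eLpNorm_lim_le_liminf_eLpNorm (fun n => ((hφ n).memLp (ENNReal.ofReal p)).1) u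
    hae).trans (liminf_le_liminf (Eventually.of_forall fun n =>
      hC _ (hφ n).contDiff_one (hφ n).2.1))

theorem lpNorm_ofReal_rpow {X E : Type*} [MeasurableSpace X] {μ : Measure X}
    [NormedAddCommGroup E] {p : ℝ} (hp : 0 < p) {f : X → E} (hf : AEStronglyMeasurable f μ) :
    lpNorm f (ENNReal.ofReal p) μ ^ p = ∫ x, ‖f x‖ ^ p ∂μ := by
  rw [lpNorm_eq_integral_norm_rpow_toReal (ENNReal.ofReal_pos.2 hp).ne' ENNReal.ofReal_ne_top hf,
    ENNReal.toReal_ofReal hp.le, Real.rpow_inv_rpow (by positivity) hp.ne']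

theorem exists_setIntegral_rpow_le_of_memW10 (N : ℕ) {p : ℝ} (hp : 1 < p) :
    ∃ s > (0 : ℝ), ∃ C ≥ (0 : ℝ), ∀ (Ω : Set (EucN N)) (u : EucN N → ℝ) (g : EucN N → EucN N),
      MemW10 p Ω u g → ∀ A : Set (EucN N), volume A ≠ ⊤ →
        ∫ x in A, |u x| ^ p ≤
          C * volume.real A ^ s * ((∫ x, |u x| ^ p) + ∫ x, ‖g x‖ ^ p) := by
  obtain ⟨χ, hχ, C, hC⟩ := exists_memW10_eLpNorm_le N hp
  have hp0 : 0 < p := by linarith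
  set e := 1 / p - 1 / (χ * p) with he
  have he0 : 0 < e := sub_pos.2 (one_div_lt_one_div_of_lt hp0 (lt_mul_of_one_lt_left hp0 hχ))
  refine ⟨e * p, by positivity, C ^ p * 2 ^ (p - 1), by positivity, fun Ω u g h A hA => ?_⟩
  set a := lpNorm u (ENNReal.ofReal p) volume
  set b := lpNorm g (ENNReal.ofReal p) volume
  have hle : lpNorm u (ENNReal.ofReal p) (volume.restrict A) ≤ C * (a + b) * volume.real A ^ e := by
    have hhold := eLpNorm_le_eLpNorm_mul_rpow_measure_univ (p := ENNReal.ofReal p)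
      (le_mul_of_one_le_left' (ENNReal.one_le_coe_iff.2 hχ.le)) (h.memLp.1.restrict (s := A))
    rw [ENNReal.toReal_mul, ENNReal.toReal_ofReal hp0.le, ENNReal.coe_toReal, ← he,
      Measure.restrict_apply_univ] at hhold
    have hle' := hhold.trans (mul_le_mul_left ((eLpNorm_restrict_le u _ _ A).trans (hC Ω u g h)) _)
    have htop : C * (eLpNorm u (ENNReal.ofReal p) volume + eLpNorm g (ENNReal.ofReal p) volume)
        * volume A ^ e ≠ ⊤ := ENNReal.mul_ne_top (ENNReal.mul_ne_top ENNReal.coe_ne_top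
      (ENNReal.add_ne_top.2 ⟨h.memLp.2.ne, h.memLp_grad.2.ne⟩))
      (ENNReal.rpow_ne_top_of_nonneg he0.le hA)
    simpa only [ENNReal.toReal_mul, ENNReal.toReal_add h.memLp.2.ne h.memLp_grad.2.ne,
      toReal_eLpNorm h.memLp.1, toReal_eLpNorm h.memLp_grad.1, toReal_eLpNorm h.memLp.1.restrict,
      ENNReal.coe_toReal, ← ENNReal.toReal_rpow, ← measureReal_def] using
      ENNReal.toReal_mono htop hle'
  have ha : 0 ≤ a := lpNorm_nonneg
  have hb : 0 ≤ b := lpNorm_nonneg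
  simp only [← Real.norm_eq_abs]
  rw [← lpNorm_ofReal_rpow hp0 h.memLp.1, ← lpNorm_ofReal_rpow hp0 h.memLp_grad.1,
    ← lpNorm_ofReal_rpow hp0 h.memLp.1.restrict]
  calc lpNorm u (ENNReal.ofReal p) (volume.restrict A) ^ p
      ≤ (C * (a + b) * volume.real A ^ e) ^ p := Real.rpow_le_rpow lpNorm_nonneg hle hp0.le
    _ = C ^ p * (a + b) ^ p * volume.real A ^ (e * p) := by
        rw [Real.mul_rpow (by positivity) (by positivity), Real.mul_rpow (by positivity)
          (by positivity), ← Real.rpow_mul measureReal_nonneg]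
    _ ≤ C ^ p * (2 ^ (p - 1) * (a ^ p + b ^ p)) * volume.real A ^ (e * p) := by
        gcongr
        exact add_rpow_le_mul_add_rpow hp.le ha hb
    _ = C ^ p * 2 ^ (p - 1) * volume.real A ^ (e * p) * (a ^ p + b ^ p) := by ring

/-! ### Weighted estimates away from a ball -/

theorem gradient_rpow_const {V : Type*} [NormedAddCommGroup V] [InnerProductSpace ℝ V]
    [CompleteSpace V] {f : V → ℝ} {x : V} {s : ℝ} (hf : DifferentiableAt ℝ f x)
    (h : f x ≠ 0 ∨ 1 ≤ s) :
    gradient (fun y => f y ^ s) x = (s * f x ^ (s - 1)) • gradient f x := by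
  have hd := Real.hasDerivAt_rpow_const h
  rw [gradient_comp (F := fun t => t ^ s) hd.differentiableAt hf, hd.deriv]

theorem pDual.norm_smul_rpow_add_inner {V : Type*} [NormedAddCommGroup V]
    [InnerProductSpace ℝ V] {p c : ℝ} (hp : 1 < p) (hc : 0 ≤ c) (t : ℝ) (a b : V) :
    ‖c • a‖ ^ p + p * ⟪pDual p (c • a), t • b⟫
      = ⟪pDual p a, c ^ p • a + t • (p * c ^ (p - 1)) • b⟫ := by
  rw [norm_smul, Real.norm_of_nonneg hc, Real.mul_rpow hc (norm_nonneg a), pDual.smul hp hc,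
    inner_add_right]
  simp only [real_inner_smul_left, real_inner_smul_right, pDual.inner_self (by linarith : 0 < p)]
  ring

theorem pDual.mul_rpow_mul_self {p c : ℝ} (hp : 0 < p) (hc : 0 ≤ c) (t : ℝ) :
    pDual p t * (c ^ p * t) = |c * t| ^ p := by
  have h : pDual p t * t = |t| ^ p := by
    rw [← Real.inner_apply, pDual.inner_self hp, Real.norm_eq_abs]
  rw [abs_mul, abs_of_nonneg hc, Real.mul_rpow hc (abs_nonneg t), ← h, mul_left_comm]

theorem integral_norm_smul_rpow_le {X V : Type*} [MeasurableSpace X] {m : Measure X}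
    [NormedAddCommGroup V] [NormedSpace ℝ V] {p α c : ℝ} (hp : 1 ≤ p) (hα : 0 ≤ α) (hc : 0 ≤ c)
    {H u : X → ℝ} {b : X → V} (hH : ∀ x, 0 ≤ H x) (hb : ∀ x, ‖b x‖ ≤ α * H x + c)
    (hHu : Integrable (fun x => |H x * u x| ^ p) m) (hu : Integrable (fun x => |u x| ^ p) m) :
    ∫ x, ‖u x • b x‖ ^ p ∂m ≤
      2 ^ (p - 1) * (α ^ p * (∫ x, |H x * u x| ^ p ∂m) + c ^ p * ∫ x, |u x| ^ p ∂m) := by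
  rw [← integral_const_mul, ← integral_const_mul,
    ← integral_add (hHu.const_mul _) (hu.const_mul _), ← integral_const_mul]
  refine integral_mono_of_nonneg (ae_of_all _ fun x => by positivity)
    (((hHu.const_mul _).add (hu.const_mul _)).const_mul _) (ae_of_all _ fun x => ?_)
  have hbound : ‖u x • b x‖ ≤ α * |H x * u x| + c * |u x| := by
    rw [norm_smul, Real.norm_eq_abs, abs_mul, abs_of_nonneg (hH x)]
    nlinarith [mul_le_mul_of_nonneg_left (hb x) (abs_nonneg (u x))]
  calc ‖u x • b x‖ ^ p ≤ (α * |H x * u x| + c * |u x|) ^ p := by gcongr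
    _ ≤ 2 ^ (p - 1) * ((α * |H x * u x|) ^ p + (c * |u x|) ^ p) :=
      add_rpow_le_mul_add_rpow hp (by positivity) (by positivity)
    _ = _ := by rw [Real.mul_rpow hα (abs_nonneg _), Real.mul_rpow hc (abs_nonneg _)]

namespace IsEigenpair

variable {N : ℕ} {p lam μ ε C : ℝ} {Ω Ω' : Set (EucN N)} {u : EucN N → ℝ} {g : EucN N → EucN N}
  {H : EucN N → ℝ}

theorem integral_inner_rpow_mul (h : IsEigenpair p Ω lam u g) (hp : 1 < p)
    (hH : ContDiff ℝ (⊤ : ℕ∞) H) (hHp : ContDiff ℝ (⊤ : ℕ∞) fun x => H x ^ p)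
    (hH0 : ∀ x, 0 ≤ H x) {L L' : ℝ} (hL : ∀ x, H x ≤ L) (hL' : ∀ x, ‖gradient H x‖ ≤ L') :
    Integrable (fun x => ‖H x • g x‖ ^ p + p * ⟪pDual p (H x • g x), u x • gradient H x⟫) ∧
      ∫ x, (‖H x • g x‖ ^ p + p * ⟪pDual p (H x • g x), u x • gradient H x⟫)
        = lam * ∫ x, |H x * u x| ^ p := by
  have hL0 : 0 ≤ L := (hH0 0).trans (hL 0)
  have hgrad (x : EucN N) : gradient (fun y => H y ^ p) x = (p * H x ^ (p - 1)) • gradient H x :=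
    gradient_rpow_const (hH.differentiable (by simp) x) (Or.inr hp.le)
  have htest := h.mem.mul hp.le (Ω' := Ω) hHp (L := L ^ p) (L' := p * L ^ (p - 1) * L')
    (fun x => by
      rw [abs_of_nonneg (Real.rpow_nonneg (hH0 x) p)]
      exact Real.rpow_le_rpow (hH0 x) (hL x) (by linarith))
    (fun x => by
      rw [hgrad, norm_smul, norm_mul, Real.norm_of_nonneg (by linarith : 0 ≤ p),
        Real.norm_of_nonneg (Real.rpow_nonneg (hH0 x) _)]
      gcongr
      exacts [hH0 x, hL x, hL' x])
    inter_subset_right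
  have heq := h.integral_eq _ _ htest
  have hint := pDual.integrable_inner hp h.mem.memLp_grad htest.memLp_grad
  simp only [hgrad, ← pDual.norm_smul_rpow_add_inner hp (hH0 _)] at heq hint
  simp only [pDual.mul_rpow_mul_self (show 0 < p by linarith) (hH0 _)] at heq
  exact ⟨hint, heq⟩

/-- Agmon's trick: testing the equation with `H ^ p * u` bounds the energy of `H * u`, which the
Poincaré inequality of `Ω'` bounds below. -/
theorem mul_integral_rpow_mul_le (h : IsEigenpair p Ω lam u g) (hp : 1 < p)
    (hC : ∀ a b : EucN N,
      ‖a + b‖ ^ p ≤ (1 + ε) * (‖a‖ ^ p + p * ⟪pDual p a, b⟫) + C * ‖b‖ ^ p)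
    (hμ : ENNReal.ofReal μ ≤ lambda1p N p hp.le Ω')
    (hH : ContDiff ℝ (⊤ : ℕ∞) H) (hHp : ContDiff ℝ (⊤ : ℕ∞) fun x => H x ^ p)
    (hH0 : ∀ x, 0 ≤ H x) {L L' : ℝ} (hL : ∀ x, H x ≤ L) (hL' : ∀ x, ‖gradient H x‖ ≤ L')
    (hsupp : tsupport H ∩ Ω ⊆ Ω') :
    μ * ∫ x, |H x * u x| ^ p ≤
      (1 + ε) * (lam * ∫ x, |H x * u x| ^ p) + C * ∫ x, ‖u x • gradient H x‖ ^ p := by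
  have hp0 : 0 < p := by linarith
  have hHu := h.mem.mul hp.le hH (fun x => by rw [abs_of_nonneg (hH0 x)]; exact hL x) hL' hsupp
  obtain ⟨hint, heq⟩ := h.integral_inner_rpow_mul hp hH hHp hH0 hL hL'
  have hint' : Integrable fun x => ‖u x • gradient H x‖ ^ p :=
    integrable_norm_rpow_of_memLp hp0 <| h.mem.memLp.of_le_mul
      (h.mem.memLp.1.smul (continuous_gradient
        (hH.of_le (by exact_mod_cast le_top))).aestronglyMeasurable)
      (ae_of_all _ fun x => by
        rw [norm_smul, mul_comm]
        exact mul_le_mul_of_nonneg_right (hL' x) (norm_nonneg _))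
  calc μ * ∫ x, |H x * u x| ^ p ≤ ∫ x, ‖H x • g x + u x • gradient H x‖ ^ p :=
        hHu.mul_integral_rpow_le hp.le hμ
    _ ≤ ∫ x, ((1 + ε) * (‖H x • g x‖ ^ p + p * ⟪pDual p (H x • g x), u x • gradient H x⟫)
          + C * ‖u x • gradient H x‖ ^ p) :=
        integral_mono (integrable_norm_rpow_of_memLp hp0 hHu.memLp_grad)
          ((hint.const_mul _).add (hint'.const_mul _)) fun x => hC _ _
    _ = _ := by
        rw [integral_add (hint.const_mul _) (hint'.const_mul _), integral_const_mul,
          integral_const_mul, heq]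

theorem integral_rpow_mul_le_of_gap (h : IsEigenpair p Ω lam u g) (hp : 1 < p) (hC0 : 0 ≤ C)
    (hC : ∀ a b : EucN N,
      ‖a + b‖ ^ p ≤ (1 + ε) * (‖a‖ ^ p + p * ⟪pDual p a, b⟫) + C * ‖b‖ ^ p)
    (hμ : ENNReal.ofReal μ ≤ lambda1p N p hp.le Ω')
    {α c : ℝ} (hα : 0 ≤ α) (hc : 0 ≤ c) (hgap : (1 + ε) * lam + C * (2 ^ (p - 1) * α ^ p) < μ)
    (hH : ContDiff ℝ (⊤ : ℕ∞) H) (hHp : ContDiff ℝ (⊤ : ℕ∞) fun x => H x ^ p)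
    (hH0 : ∀ x, 0 ≤ H x) {L : ℝ} (hL : ∀ x, H x ≤ L)
    (hH' : ∀ x, ‖gradient H x‖ ≤ α * H x + c) (hsupp : tsupport H ∩ Ω ⊆ Ω') :
    ∫ x, |H x * u x| ^ p ≤ C * 2 ^ (p - 1) * c ^ p
      / (μ - ((1 + ε) * lam + C * (2 ^ (p - 1) * α ^ p))) * ∫ x, |u x| ^ p := by
  have hL' (x : EucN N) : ‖gradient H x‖ ≤ α * L + c :=
    (hH' x).trans (by gcongr; exact hL x)
  have hHu := (h.mem.mul hp.le hH (fun x => by rw [abs_of_nonneg (hH0 x)]; exact hL x) hL'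
    hsupp).integrable_abs_rpow (by linarith)
  have hagmon := h.mul_integral_rpow_mul_le hp hC hμ hH hHp hH0 hL hL' hsupp
  have herror := mul_le_mul_of_nonneg_left (integral_norm_smul_rpow_le hp.le hα hc hH0 hH' hHu
    (h.mem.integrable_abs_rpow (by linarith))) hC0
  rw [div_mul_eq_mul_div, le_div_iff₀ (sub_pos.2 hgap)]
  linarith

end IsEigenpair

/-- A weight `G` growing at most exponentially with rate `α`. It is moreover bounded, so that
`G * u` is in `L^p` whenever `u` is; the bound enters no estimate. -/
structure IsSlowWeight {N : ℕ} (α : ℝ) (G : EucN N → ℝ) : Prop where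
  contDiff : ContDiff ℝ (⊤ : ℕ∞) G
  pos : ∀ x, 0 < G x
  norm_gradient_le : ∀ x, ‖gradient G x‖ ≤ α * G x
  exists_le : ∃ D, ∀ x, G x ≤ D

namespace IsSlowWeight

variable {N : ℕ} {α : ℝ} {G : EucN N → ℝ}

theorem contDiff_rpow (hG : IsSlowWeight α G) (s : ℝ) : ContDiff ℝ (⊤ : ℕ∞) fun x => G x ^ s :=
  hG.contDiff.rpow_const_of_ne fun x => (hG.pos x).ne'

theorem abs_eq (hG : IsSlowWeight α G) (x : EucN N) : |G x| = G x := abs_of_pos (hG.pos x)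

theorem rate_nonneg (hG : IsSlowWeight α G) : 0 ≤ α :=
  nonneg_of_mul_nonneg_left ((norm_nonneg _).trans (hG.norm_gradient_le 0)) (hG.pos 0)

theorem memW10_mul (hG : IsSlowWeight α G) {p : ℝ} (hp : 1 ≤ p) {Ω : Set (EucN N)}
    {u : EucN N → ℝ} {g : EucN N → EucN N} (h : MemW10 p Ω u g) :
    MemW10 p Ω (fun x => G x * u x) (fun x => G x • g x + u x • gradient G x) := by
  obtain ⟨D, hD⟩ := hG.exists_le
  exact h.mul hp hG.contDiff (L := D) (L' := α * D) (fun x => (hG.abs_eq x).trans_le (hD x))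
    (fun x => (hG.norm_gradient_le x).trans (by gcongr; exacts [hG.rate_nonneg, hD x]))
    inter_subset_right

end IsSlowWeight

theorem expNegInvGlue_rpow {s : ℝ} (hs : 0 < s) (t : ℝ) :
    expNegInvGlue t ^ s = expNegInvGlue (t / s) := by
  rcases le_or_gt t 0 with ht | ht
  · rw [expNegInvGlue.zero_of_nonpos ht,
      expNegInvGlue.zero_of_nonpos (div_nonpos_of_nonpos_of_nonneg ht hs.le), Real.zero_rpow hs.ne']
  · rw [expNegInvGlue, expNegInvGlue, if_neg ht.not_ge, if_neg (div_pos ht hs).not_ge,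
      ← Real.exp_mul]
    congr 1
    field_simp

theorem contDiff_smoothTransition_rpow {s : ℝ} (hs : 0 < s) :
    ContDiff ℝ (⊤ : ℕ∞) fun t => Real.smoothTransition t ^ s := by
  have heq (t : ℝ) : Real.smoothTransition t ^ s =
      expNegInvGlue (t / s) * (expNegInvGlue t + expNegInvGlue (1 - t)) ^ (-s) := by
    have hpos := Real.smoothTransition.pos_denom t
    rw [Real.smoothTransition, Real.div_rpow (expNegInvGlue.nonneg _) hpos.le,
      expNegInvGlue_rpow hs, Real.rpow_neg hpos.le, div_eq_mul_inv]
  simp only [heq]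
  exact (expNegInvGlue.contDiff.comp (contDiff_id.div_const s)).mul
    ((expNegInvGlue.contDiff.add (expNegInvGlue.contDiff.comp
      (contDiff_const.sub contDiff_id))).rpow_const_of_ne
        fun t => (Real.smoothTransition.pos_denom t).ne')

/-- A smooth cutoff which vanishes on the closed ball of radius `ρ` and equals `1` outside the ball
of radius `ρ + 1`. -/
def outerCutoff {N : ℕ} (ρ : ℝ) (x : EucN N) : ℝ := Real.smoothTransition (‖x‖ ^ 2 - ρ ^ 2)

namespace outerCutoff

variable {N : ℕ} {ρ s : ℝ} {x : EucN N}

theorem contDiff : ContDiff ℝ (⊤ : ℕ∞) (outerCutoff (N := N) ρ) :=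
  Real.smoothTransition.contDiff.comp ((contDiff_norm_sq ℝ).sub contDiff_const)

theorem contDiff_rpow (hs : 0 < s) : ContDiff ℝ (⊤ : ℕ∞) fun x : EucN N => outerCutoff ρ x ^ s :=
  (contDiff_smoothTransition_rpow hs).comp ((contDiff_norm_sq ℝ).sub contDiff_const)

theorem nonneg : 0 ≤ outerCutoff ρ x := Real.smoothTransition.nonneg _

theorem le_one : outerCutoff ρ x ≤ 1 := Real.smoothTransition.le_one _

theorem eq_zero (hx : ‖x‖ ≤ ρ) : outerCutoff ρ x = 0 :=
  Real.smoothTransition.zero_of_nonpos (by nlinarith [norm_nonneg x])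

theorem eq_one (hρ : 0 ≤ ρ) (hx : ρ + 1 ≤ ‖x‖) : outerCutoff ρ x = 1 :=
  Real.smoothTransition.one_of_one_le (by nlinarith)

theorem tsupport_mul_inter_subset {R : ℝ} (hR : R < ρ) (G : EucN N → ℝ) (Ω : Set (EucN N)) :
    tsupport (fun x => outerCutoff ρ x * G x) ∩ Ω ⊆ Ω \ closure (ball 0 R) := by
  have hsupp : tsupport (outerCutoff (N := N) ρ) ⊆ {x | ρ ≤ ‖x‖} :=
    closure_minimal (fun _ hx => (not_le.1 (mt eq_zero hx)).le)
      (isClosed_le continuous_const continuous_norm)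
  rintro x ⟨hx, hxΩ⟩
  exact ⟨hxΩ, fun hxR => (hR.trans_le (hsupp (tsupport_mul_subset_left hx))).not_ge
    (mem_closedBall_zero_iff.1 (closure_ball_subset_closedBall hxR))⟩

theorem memLp_mul {f : EucN N → ℝ} {q : ℝ≥0∞} (hf : MemLp f q volume) :
    MemLp (fun x => outerCutoff ρ x * f x) q volume :=
  hf.mono (contDiff.continuous.aestronglyMeasurable.mul hf.1) <| ae_of_all _ fun x => by
    rw [norm_mul, Real.norm_of_nonneg nonneg]
    exact mul_le_of_le_one_left (norm_nonneg _) le_one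

theorem gradient_eq_zero (hρ : 0 ≤ ρ) (hx : ρ + 1 < ‖x‖) : gradient (outerCutoff ρ) x = 0 := by
  have h : outerCutoff (N := N) ρ =ᶠ[𝓝 x] fun _ => 1 := by
    filter_upwards [continuous_norm.continuousAt.eventually (lt_mem_nhds hx)] with y hy
    exact eq_one hρ hy.le
  rw [h.gradient_eq, gradient_fun_const]

theorem exists_norm_gradient_le (N : ℕ) (hρ : 0 ≤ ρ) :
    ∃ L ≥ (0 : ℝ), ∀ x : EucN N, ‖gradient (outerCutoff ρ) x‖ ≤ L := by
  obtain ⟨L, hL⟩ := (isCompact_closedBall (0 : EucN N) (ρ + 1)).exists_bound_of_continuousOn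
    (continuous_gradient (contDiff.of_le (by exact_mod_cast le_top))).continuousOn
  have hL0 : 0 ≤ L := (norm_nonneg _).trans (hL 0 (mem_closedBall_self (by linarith)))
  refine ⟨L, hL0, fun x => ?_⟩
  rcases le_or_gt ‖x‖ (ρ + 1) with hx | hx
  · exact hL x (mem_closedBall_zero_iff.2 hx)
  · rwa [gradient_eq_zero hρ hx, norm_zero]

theorem norm_gradient_mul_le {α B L : ℝ} {G : EucN N → ℝ} (hρ : 0 ≤ ρ) (hB : 0 ≤ B) (hL0 : 0 ≤ L)
    (hL : ∀ x : EucN N, ‖gradient (outerCutoff ρ) x‖ ≤ L) (hG : IsSlowWeight α G)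
    (hGB : ∀ x, ‖x‖ ≤ ρ + 1 → G x ≤ B) (x : EucN N) :
    ‖gradient (fun y => outerCutoff ρ y * G y) x‖ ≤ α * (outerCutoff ρ x * G x) + B * L := by
  rw [gradient_fun_mul (contDiff.differentiable (by simp) x)
    (hG.contDiff.differentiable (by simp) x)]
  refine norm_add_le_of_le ?_ ?_
  · rw [norm_smul, Real.norm_of_nonneg nonneg, mul_left_comm]
    exact mul_le_mul_of_nonneg_left (hG.norm_gradient_le x) nonneg
  · rcases le_or_gt ‖x‖ (ρ + 1) with hx | hx
    · rw [norm_smul, Real.norm_of_nonneg (hG.pos x).le]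
      exact mul_le_mul (hGB x hx) (hL x) (norm_nonneg _) hB
    · rw [gradient_eq_zero hρ hx, smul_zero, norm_zero]
      positivity

end outerCutoff

theorem integral_mul_rpow_le_outerCutoff_add {N : ℕ} {p α ρ B : ℝ} {G u : EucN N → ℝ} (hp : 0 < p)
    (hρ : 0 ≤ ρ) (hB : 0 ≤ B) (hG : IsSlowWeight α G) (hGB : ∀ x, ‖x‖ ≤ ρ + 1 → G x ≤ B)
    (hu : Integrable fun x => |u x| ^ p)
    (hηu : Integrable fun x => |outerCutoff ρ x * G x * u x| ^ p) :
    ∫ x, |G x * u x| ^ p ≤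
      (∫ x, |outerCutoff ρ x * G x * u x| ^ p) + B ^ p * ∫ x, |u x| ^ p := by
  rw [← integral_const_mul, ← integral_add hηu (hu.const_mul _)]
  refine integral_mono_of_nonneg (ae_of_all _ fun x => by positivity) (hηu.add (hu.const_mul _))
    (ae_of_all _ fun x => ?_)
  rcases le_or_gt ‖x‖ (ρ + 1) with hx | hx
  · refine le_add_of_nonneg_of_le (by positivity) ?_
    beta_reduce
    rw [abs_mul, hG.abs_eq, ← Real.mul_rpow hB (abs_nonneg _)]
    have := (hG.pos x).le
    gcongr
    exact hGB x hx
  · simp only [outerCutoff.eq_one hρ hx.le, one_mul]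
    exact le_add_of_nonneg_right (by positivity)

theorem IsEigenpair.exists_integral_mul_rpow_le {N : ℕ} {p lam μ ε C α R B : ℝ} {Ω : Set (EucN N)}
    (hp : 1 < p) (hC0 : 0 ≤ C)
    (hC : ∀ a b : EucN N,
      ‖a + b‖ ^ p ≤ (1 + ε) * (‖a‖ ^ p + p * ⟪pDual p a, b⟫) + C * ‖b‖ ^ p)
    (hR : 0 ≤ R) (hμ : ENNReal.ofReal μ ≤ lambda1p N p hp.le (Ω \ closure (ball (0 : EucN N) R)))
    (hB : 0 ≤ B) (hgap : (1 + ε) * lam + C * (2 ^ (p - 1) * α ^ p) < μ) :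
    ∃ K ≥ (0 : ℝ), ∀ u g, IsEigenpair p Ω lam u g → ∀ G : EucN N → ℝ, IsSlowWeight α G →
      (∀ x, ‖x‖ ≤ R + 2 → G x ≤ B) → ∫ x, |G x * u x| ^ p ≤ K * ∫ x, |u x| ^ p := by
  have hR' : 0 ≤ R + 1 := by linarith
  obtain ⟨L, hL0, hL⟩ := outerCutoff.exists_norm_gradient_le N hR'
  have := sub_pos.2 hgap
  refine ⟨C * 2 ^ (p - 1) * (B * L) ^ p / (μ - ((1 + ε) * lam + C * (2 ^ (p - 1) * α ^ p))) + B ^ p,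
    by positivity, fun u g h G hG hGB => ?_⟩
  replace hGB (x : EucN N) (hx : ‖x‖ ≤ R + 1 + 1) : G x ≤ B := hGB x (by linarith)
  obtain ⟨D, hD⟩ := hG.exists_le
  have hsmooth : ContDiff ℝ (⊤ : ℕ∞) fun x => (outerCutoff (R + 1) x * G x) ^ p := by
    simp only [Real.mul_rpow outerCutoff.nonneg (hG.pos _).le]
    exact (outerCutoff.contDiff_rpow (by linarith)).mul (hG.contDiff_rpow p)
  have hηGu := integrable_norm_rpow_of_memLp (show 0 < p by linarith)
    (outerCutoff.memLp_mul (ρ := R + 1) (hG.memW10_mul hp.le h.mem).memLp)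
  simp only [← mul_assoc, Real.norm_eq_abs] at hηGu
  have houter := h.integral_rpow_mul_le_of_gap hp hC0 hC hμ hG.rate_nonneg (by positivity) hgap
    (outerCutoff.contDiff.mul hG.contDiff) hsmooth
    (fun x => mul_nonneg outerCutoff.nonneg (hG.pos x).le)
    (fun x => (mul_le_of_le_one_left (hG.pos x).le outerCutoff.le_one).trans (hD x))
    (outerCutoff.norm_gradient_mul_le hR' hB hL0 hL hG hGB)
    (outerCutoff.tsupport_mul_inter_subset (by linarith) G Ω)
  calc ∫ x, |G x * u x| ^ p ≤ _ := integral_mul_rpow_le_outerCutoff_add (by linarith) hR' hB hG hGB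
        (h.mem.integrable_abs_rpow (by linarith)) hηGu
    _ ≤ _ := by
      rw [add_mul]
      exact add_le_add_left houter _

/-! ### Energy estimates on superlevel sets -/

namespace pDual

theorem norm_smul_add_rpow_le {V : Type*} [NormedAddCommGroup V] [NormedSpace ℝ V]
    {p α d v : ℝ} (hp : 1 ≤ p) (hα : 0 ≤ α) (hd : 0 ≤ d) (hd1 : d ≤ 1) {ξ b : V}
    (hb : ‖b‖ ≤ α * |v|) :
    ‖d • (ξ + b)‖ ^ p ≤ d * (2 ^ (p - 1) * (‖ξ‖ ^ p + α ^ p * |v| ^ p)) := by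
  rw [norm_smul, Real.norm_of_nonneg hd, Real.mul_rpow hd (norm_nonneg _)]
  gcongr
  · exact (Real.rpow_le_rpow_of_exponent_ge' hd hd1 zero_le_one hp).trans_eq (Real.rpow_one d)
  · calc ‖ξ + b‖ ^ p ≤ (‖ξ‖ + α * |v|) ^ p := by gcongr; exact norm_add_le_of_le le_rfl hb
      _ ≤ 2 ^ (p - 1) * (‖ξ‖ ^ p + (α * |v|) ^ p) :=
        add_rpow_le_mul_add_rpow hp (norm_nonneg ξ) (by positivity)
      _ = _ := by rw [Real.mul_rpow hα (abs_nonneg v)]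

theorem coercive_of_norm_le {V : Type*} [NormedAddCommGroup V] [InnerProductSpace ℝ V]
    {p α d f v : ℝ} (hp : 1 < p) (hα : 0 ≤ α) (hd : 0 ≤ d) (hf : 0 ≤ f) (hfd : f ≤ |v| * d)
    {ξ b c : V} (hb : ‖b‖ ≤ α * |v|) (hc : ‖c‖ ≤ (p - 1) * α) :
    d * (1 / 2 * ‖ξ‖ ^ p - 2 ^ (p - 1) * ((p * α) ^ p * |v| ^ p)) ≤
      d * ⟪pDual p ξ, ξ + b⟫ + f * ⟪pDual p ξ, c⟫ := by
  have hyoung := mul_rpow_sub_one_le hp one_half_pos (norm_nonneg ξ)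
    (show 0 ≤ p * α * |v| by positivity)
  rw [one_div_one_div, Real.mul_rpow (by positivity) (abs_nonneg v)] at hyoung
  have hinner_b : -(α * |v| * ‖ξ‖ ^ (p - 1)) ≤ ⟪pDual p ξ, b⟫ :=
    neg_le_of_abs_le ((abs_inner_le hp ξ b).trans (by gcongr))
  have hinner_c : -((p - 1) * α * ‖ξ‖ ^ (p - 1)) ≤ ⟪pDual p ξ, c⟫ :=
    neg_le_of_abs_le ((abs_inner_le hp ξ c).trans (by gcongr))
  have : 0 ≤ p - 1 := by linarith
  rw [inner_add_right, inner_self (by linarith)]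
  calc d * (1 / 2 * ‖ξ‖ ^ p - 2 ^ (p - 1) * ((p * α) ^ p * |v| ^ p))
      ≤ d * (‖ξ‖ ^ p - p * α * |v| * ‖ξ‖ ^ (p - 1)) :=
      mul_le_mul_of_nonneg_left (by linarith) hd
    _ = d * (‖ξ‖ ^ p + -(α * |v| * ‖ξ‖ ^ (p - 1)))
        - |v| * d * ((p - 1) * α * ‖ξ‖ ^ (p - 1)) := by ring
    _ ≤ d * (‖ξ‖ ^ p + -(α * |v| * ‖ξ‖ ^ (p - 1))) - f * ((p - 1) * α * ‖ξ‖ ^ (p - 1)) := by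
      gcongr
    _ = d * (‖ξ‖ ^ p + -(α * |v| * ‖ξ‖ ^ (p - 1))) + f * -((p - 1) * α * ‖ξ‖ ^ (p - 1)) := by ring
    _ ≤ _ := by gcongr

/-- The error term in the energy estimate for functions `G * u`, where `G` is a weight of rate
`α`. -/
def errorConst (p α : ℝ) : ℝ := 2 ^ p * 2 ^ (p - 1) * (p * α) ^ p + 2 ^ (p - 1) * α ^ p

theorem errorConst_nonneg {p α : ℝ} (hp : 0 ≤ p) (hα : 0 ≤ α) : 0 ≤ errorConst p α := by
  rw [errorConst]
  positivity

theorem norm_smul_add_rpow_le_inner {V : Type*} [NormedAddCommGroup V] [InnerProductSpace ℝ V]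
    {p α d f v : ℝ} (hp : 1 < p) (hα : 0 ≤ α) (hd : 0 ≤ d) (hd1 : d ≤ 1) (hf : 0 ≤ f)
    (hfd : f ≤ |v| * d) {ξ b c : V} (hb : ‖b‖ ≤ α * |v|) (hc : ‖c‖ ≤ (p - 1) * α) :
    ‖d • (ξ + b)‖ ^ p ≤ 2 ^ p * (d * ⟪pDual p ξ, ξ + b⟫ + f * ⟪pDual p ξ, c⟫)
      + errorConst p α * (d * |v| ^ p) := by
  have htwo : (2 : ℝ) ^ p = 2 ^ (p - 1) * 2 := by
    rw [← Real.rpow_add_one two_ne_zero, sub_add_cancel]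
  calc ‖d • (ξ + b)‖ ^ p ≤ _ := norm_smul_add_rpow_le hp.le hα hd hd1 hb
    _ = 2 ^ p * (d * (1 / 2 * ‖ξ‖ ^ p - 2 ^ (p - 1) * ((p * α) ^ p * |v| ^ p)))
        + errorConst p α * (d * |v| ^ p) := by rw [errorConst, htwo]; ring
    _ ≤ _ := by gcongr; exact coercive_of_norm_le hp hα hd hf hfd hb hc

theorem inner_rpow_smul_add {V : Type*} [NormedAddCommGroup V] [InnerProductSpace ℝ V]
    {p c : ℝ} (hp : 1 < p) (hc : 0 < c) (d f : ℝ) (a b e : V) :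
    ⟪pDual p a, c ^ (p - 1) • d • b + f • ((p - 1) * c ^ (p - 1 - 1)) • e⟫
      = d * ⟪pDual p (c • a), b⟫ + f * ⟪pDual p (c • a), (p - 1) • c⁻¹ • e⟫ := by
  rw [smul hp hc.le, Real.rpow_sub_one hc.ne' (p - 1)]
  simp only [inner_add_right, real_inner_smul_left, real_inner_smul_right]
  ring

end pDual

theorem IsSlowWeight.rpow {N : ℕ} {α s : ℝ} {G : EucN N → ℝ} (hG : IsSlowWeight α G) (hs : 0 ≤ s) :
    IsSlowWeight (s * α) fun x => G x ^ s := by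
  refine ⟨hG.contDiff_rpow s, fun x => Real.rpow_pos_of_pos (hG.pos x) s, fun x => ?_, ?_⟩
  · have hpos := hG.pos x
    rw [gradient_rpow_const (hG.contDiff.differentiable (by simp) x) (Or.inl hpos.ne'), norm_smul,
      Real.norm_of_nonneg (by positivity)]
    calc s * G x ^ (s - 1) * ‖gradient G x‖ ≤ s * G x ^ (s - 1) * (α * G x) := by
          gcongr
          exact hG.norm_gradient_le x
      _ = s * α * G x ^ s := by
        rw [Real.rpow_sub_one hpos.ne']
        field_simp
  · obtain ⟨D, hD⟩ := hG.exists_le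
    exact ⟨D ^ s, fun x => Real.rpow_le_rpow (hG.pos x).le (hD x) hs⟩

theorem IsSlowWeight.norm_smul_gradient_le {N : ℕ} {α : ℝ} {G : EucN N → ℝ}
    (hG : IsSlowWeight α G) (u : EucN N → ℝ) (x : EucN N) :
    ‖u x • gradient G x‖ ≤ α * |G x * u x| := by
  rw [norm_smul, Real.norm_eq_abs, abs_mul, hG.abs_eq, ← mul_assoc, mul_comm]
  exact mul_le_mul_of_nonneg_right (hG.norm_gradient_le x) (abs_nonneg _)

theorem IsSlowWeight.norm_smul_inv_smul_gradient_le {N : ℕ} {α s : ℝ} {G : EucN N → ℝ}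
    (hG : IsSlowWeight α G) (hs : 0 ≤ s) (x : EucN N) :
    ‖s • (G x)⁻¹ • gradient G x‖ ≤ s * α := by
  have hpos := hG.pos x
  rw [norm_smul, norm_smul, Real.norm_of_nonneg hs, norm_inv, Real.norm_of_nonneg hpos.le]
  gcongr
  rw [inv_mul_le_iff₀ hpos, mul_comm]
  exact hG.norm_gradient_le x

/-- The `p`-th power of the `L^p` norm of `v` on its superlevel set `{v > k}`. -/
def superlevelMass {N : ℕ} (p : ℝ) (v : EucN N → ℝ) (k : ℝ) : ℝ := ∫ x in {x | k < v x}, |v x| ^ p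

/-- The gradient of the truncation of `v` at any level `k` is controlled by the mass of `v` above
that level. This Caccioppoli inequality is all that De Giorgi's method uses of the equation. -/
structure MemDeGiorgiClass {N : ℕ} (p : ℝ) (Ω : Set (EucN N)) (K : ℝ) (v : EucN N → ℝ) : Prop where
  memLp : MemLp v (ENNReal.ofReal p) volume
  exists_integral_le : ∀ k w : ℝ, 0 ≤ k → 0 < w → ∃ h,
    MemW10 p Ω (fun x => smoothTrunc k w (v x)) h ∧
      ∫ x, ‖h x‖ ^ p ≤ K * superlevelMass p v k

theorem integral_comp_le_superlevelMass {N : ℕ} {p k : ℝ} {v : EucN N → ℝ} {φ : ℝ → ℝ}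
    (hp : 0 < p) (hv : MemLp v (ENNReal.ofReal p) volume) (hφ0 : ∀ t, 0 ≤ φ t)
    (hφk : ∀ t ≤ k, φ t = 0) (hφp : ∀ t, φ t ≤ |t| ^ p) :
    ∫ x, φ (v x) ≤ superlevelMass p v k := by
  have hmeas : NullMeasurableSet {x | k < v x} :=
    nullMeasurableSet_lt aemeasurable_const hv.1.aemeasurable
  rw [superlevelMass, ← integral_indicator₀ hmeas]
  refine integral_mono_of_nonneg (ae_of_all _ fun x => hφ0 _)
    ((integrable_norm_rpow_of_memLp hp hv).indicator₀ hmeas) (ae_of_all _ fun x => ?_)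
  rcases le_or_gt (v x) k with hx | hx
  · exact (hφk _ hx).trans_le (indicator_nonneg (fun _ _ => by positivity) x)
  · rw [indicator_of_mem (show x ∈ {x | k < v x} from hx)]
    exact hφp _

theorem pDual.mul_smoothTrunc_nonneg {p k w : ℝ} (hk : 0 ≤ k) (hw : 0 < w) (t : ℝ) :
    0 ≤ pDual p t * smoothTrunc k w t := by
  rcases le_or_gt t k with ht | ht
  · rw [smoothTrunc.of_le hw ht, mul_zero]
  · exact mul_nonneg (mul_nonneg (by positivity) (hk.trans ht.le)) (smoothTrunc.nonneg hw t)

theorem pDual.mul_smoothTrunc_le {p k w : ℝ} (hp : 1 < p) (hk : 0 ≤ k) (hw : 0 < w) (t : ℝ) :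
    pDual p t * smoothTrunc k w t ≤ |t| ^ p := by
  have h := (le_abs_self _).trans (pDual.abs_inner_le hp t (smoothTrunc k w t))
  rw [Real.inner_apply, Real.norm_of_nonneg (smoothTrunc.nonneg hw t), Real.norm_eq_abs] at h
  calc _ ≤ _ := h
    _ ≤ |t| * |t| ^ (p - 1) := by gcongr; exact smoothTrunc.le_abs hk hw t
    _ = |t| ^ p := mul_rpow_sub_one (by linarith) (abs_nonneg t)

namespace IsEigenpair

variable {N : ℕ} {p lam α : ℝ} {Ω : Set (EucN N)} {u : EucN N → ℝ} {g : EucN N → EucN N}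
  {G : EucN N → ℝ}

theorem integral_inner_weight_mul_comp (h : IsEigenpair p Ω lam u g) (hp : 1 < p)
    (hG : IsSlowWeight α G) {F : ℝ → ℝ} {f' : EucN N → EucN N}
    (hF : MemW10 p Ω (fun x => F (G x * u x)) fun x => deriv F (G x * u x) • f' x) :
    let P := fun x => deriv F (G x * u x) * ⟪pDual p (G x • g x), f' x⟫
      + F (G x * u x) * ⟪pDual p (G x • g x), (p - 1) • (G x)⁻¹ • gradient G x⟫
    Integrable P ∧ ∫ x, P x = lam * ∫ x, pDual p (G x * u x) * F (G x * u x) := by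
  have htest := (hG.rpow (s := p - 1) (by linarith)).memW10_mul hp.le hF
  have heq := h.integral_eq _ _ htest
  have hint := pDual.integrable_inner hp h.mem.memLp_grad htest.memLp_grad
  simp only [gradient_rpow_const (hG.contDiff.differentiable (by simp) _) (Or.inl (hG.pos _).ne'),
    pDual.inner_rpow_smul_add hp (hG.pos _)] at heq hint
  refine ⟨hint, heq.trans ?_⟩
  have hdual (x : EucN N) : pDual p (G x * u x) = G x ^ (p - 1) * pDual p (u x) :=
    pDual.smul hp (hG.pos x).le (u x)
  simp only [hdual]
  congr 3 with x
  ring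

theorem memDeGiorgiClass (h : IsEigenpair p Ω lam u g) (hp : 1 < p) (hlam : 0 ≤ lam)
    (hG : IsSlowWeight α G) :
    MemDeGiorgiClass p Ω (2 ^ p * lam + pDual.errorConst p α) fun x => G x * u x := by
  have hp0 : 0 < p := by linarith
  have hGu := hG.memW10_mul hp.le h.mem
  refine ⟨hGu.memLp, fun k w hk hw => ?_⟩
  have hF := hGu.comp hp.le smoothTrunc.contDiff (smoothTrunc.of_le hw hk)
    (smoothTrunc.abs_deriv_le_one hw)
  refine ⟨_, hF, ?_⟩
  obtain ⟨hint, hP⟩ := h.integral_inner_weight_mul_comp hp hG hF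
  have hint' : Integrable fun x =>
      deriv (smoothTrunc k w) (G x * u x) * |G x * u x| ^ p :=
    (hGu.integrable_abs_rpow hp0).bdd_mul (c := 1)
      ((smoothTrunc.contDiff.continuous_deriv le_rfl).comp_aestronglyMeasurable hGu.memLp.1)
      (ae_of_all _ fun x => smoothTrunc.abs_deriv_le_one hw _)
  have hpointwise (x : EucN N) := pDual.norm_smul_add_rpow_le_inner hp hG.rate_nonneg
    (smoothTrunc.deriv_nonneg hw (G x * u x)) (smoothTrunc.deriv_le_one hw _)
    (smoothTrunc.nonneg hw _) (smoothTrunc.le_abs_mul_deriv hk hw _) (ξ := G x • g x)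
    (hG.norm_smul_gradient_le u x) (hG.norm_smul_inv_smul_gradient_le (sub_nonneg.2 hp.le) x)
  have henergy := integral_mono_of_nonneg (ae_of_all _ fun x => by positivity)
    ((hint.const_mul (2 ^ p)).add (hint'.const_mul (pDual.errorConst p α)))
    (ae_of_all _ hpointwise)
  simp only [Pi.add_apply] at henergy
  rw [integral_add (hint.const_mul _) (hint'.const_mul _), integral_const_mul, integral_const_mul,
    hP, ← mul_assoc] at henergy
  refine henergy.trans ?_
  rw [add_mul]
  gcongr
  · exact integral_comp_le_superlevelMass hp0 hGu.memLp
      (φ := fun t => pDual p t * smoothTrunc k w t) (pDual.mul_smoothTrunc_nonneg hk hw)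
      (fun t ht => by rw [smoothTrunc.of_le hw ht, mul_zero]) (pDual.mul_smoothTrunc_le hp hk hw)
  · exact pDual.errorConst_nonneg hp0.le hG.rate_nonneg
  · exact integral_comp_le_superlevelMass hp0 hGu.memLp
      (φ := fun t => deriv (smoothTrunc k w) t * |t| ^ p)
      (fun t => mul_nonneg (smoothTrunc.deriv_nonneg hw t) (by positivity))
      (fun t ht => by rw [smoothTrunc.deriv_of_le hw ht, zero_mul])
      (fun t => mul_le_of_le_one_left (by positivity) (smoothTrunc.deriv_le_one hw t))

end IsEigenpair

/-! ### De Giorgi iteration -/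

theorem exists_tendsto_zero_of_le_pow_mul_rpow {A b s : ℝ} (hA : 0 < A) (hb : 1 < b) (hs : 0 < s) :
    ∃ δ > (0 : ℝ), ∀ y : ℕ → ℝ, (∀ j, 0 ≤ y j) → (∀ j, y (j + 1) ≤ A * b ^ j * y j * y j ^ s) →
      y 0 ≤ δ → Tendsto y atTop (𝓝 0) := by
  obtain ⟨q, hq0, hqs⟩ : ∃ q > (0 : ℝ), q ^ s = b⁻¹ :=
    ⟨b⁻¹ ^ s⁻¹, by positivity, Real.rpow_inv_rpow (by positivity) hs.ne'⟩
  have hq1 : q < 1 := by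
    rw [← Real.rpow_lt_rpow_iff hq0.le zero_le_one hs, hqs, Real.one_rpow]
    exact inv_lt_one_of_one_lt₀ hb
  obtain ⟨δ, hδ0, hδs⟩ : ∃ δ > (0 : ℝ), δ ^ s = q / A :=
    ⟨(q / A) ^ s⁻¹, by positivity, Real.rpow_inv_rpow (by positivity) hs.ne'⟩
  refine ⟨δ, hδ0, fun y hy hstep hy0 => ?_⟩
  have hgeom (j : ℕ) : y j ≤ δ * q ^ j := by
    induction j with
    | zero => simpa using hy0
    | succ j ih =>
      have := hy j
      calc y (j + 1) ≤ A * b ^ j * y j * y j ^ s := hstep j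
        _ ≤ A * b ^ j * (δ * q ^ j) * (δ * q ^ j) ^ s := by gcongr
        _ = A * b ^ j * (δ * q ^ j) * (q / A * (b⁻¹) ^ j) := by
          rw [Real.mul_rpow hδ0.le (by positivity), hδs, ← Real.rpow_natCast_mul hq0.le,
            mul_comm _ s, Real.rpow_mul_natCast hq0.le, hqs]
        _ = δ * q ^ (j + 1) := by
          rw [inv_pow, pow_succ]
          field_simp
  refine squeeze_zero hy hgeom ?_
  simpa using (tendsto_pow_atTop_nhds_zero_of_lt_one hq0.le hq1).const_mul δ

/-- The levels of De Giorgi's iteration, increasing from `κ` to `2 * κ`. -/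
def deGiorgiLevel (κ : ℝ) (j : ℕ) : ℝ := κ * (2 - (1 / 2) ^ j)

namespace deGiorgiLevel

variable {κ : ℝ}

theorem succ_sub (κ : ℝ) (j : ℕ) :
    deGiorgiLevel κ (j + 1) - deGiorgiLevel κ j = κ / (2 * 2 ^ j) := by
  simp only [deGiorgiLevel, pow_succ, one_div, inv_pow]
  field_simp
  ring

theorem self_le (hκ : 0 ≤ κ) (j : ℕ) : κ ≤ deGiorgiLevel κ j := by
  have : (1 / 2 : ℝ) ^ j ≤ 1 := pow_le_one₀ one_half_pos.le one_half_lt_one.le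
  exact le_mul_of_one_le_right hκ (by linarith)

theorem le_two_mul (hκ : 0 ≤ κ) (j : ℕ) : deGiorgiLevel κ j ≤ 2 * κ := by
  rw [mul_comm]
  exact mul_le_mul_of_nonneg_left (sub_le_self _ (by positivity)) hκ

end deGiorgiLevel

namespace superlevelMass

variable {N : ℕ} {p k h : ℝ} {v : EucN N → ℝ}

theorem nonneg : 0 ≤ superlevelMass p v k := integral_nonneg fun x => by positivity

theorem anti (hp : 0 < p) (hv : MemLp v (ENNReal.ofReal p) volume) (hkh : k ≤ h) :
    superlevelMass p v h ≤ superlevelMass p v k :=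
  setIntegral_mono_set (integrable_norm_rpow_of_memLp hp hv).integrableOn
    (ae_of_all _ fun x => by positivity) (ae_of_all _ fun _ hx => hkh.trans_lt hx)

theorem le_integral (hp : 0 < p) (hv : MemLp v (ENNReal.ofReal p) volume) :
    superlevelMass p v k ≤ ∫ x, |v x| ^ p :=
  setIntegral_le_integral (integrable_norm_rpow_of_memLp hp hv) (ae_of_all _ fun x => by positivity)

theorem measure_ne_top (hp : 0 < p) (hv : MemLp v (ENNReal.ofReal p) volume) (hk : 0 < k) :
    volume {x | k < v x} ≠ ⊤ :=
  ((measure_mono fun x (hx : k < v x) => show k ^ p < ‖v x‖ ^ p by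
    gcongr; exact hx.trans_le (le_abs_self _)).trans_lt
      ((integrable_norm_rpow_of_memLp hp hv).measure_gt_lt_top (by positivity))).ne

theorem rpow_mul_measureReal_le (hp : 0 < p) (hv : MemLp v (ENNReal.ofReal p) volume)
    (hk : 0 < k) : k ^ p * volume.real {x | k < v x} ≤ superlevelMass p v k := by
  rw [mul_comm, ← smul_eq_mul, ← setIntegral_const]
  exact setIntegral_mono_on₀ (integrableOn_const (measure_ne_top hp hv hk))
    (integrable_norm_rpow_of_memLp hp hv).integrableOn
    (nullMeasurableSet_lt aemeasurable_const hv.1.aemeasurable)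
    fun x (hx : k < v x) => by gcongr; exact hx.le.trans (le_abs_self _)

theorem ae_le_of_eq_zero (hp : 0 < p) (hv : MemLp v (ENNReal.ofReal p) volume) (hk : 0 < k)
    (h0 : superlevelMass p v k = 0) : ∀ᵐ x, v x ≤ k := by
  have hreal : volume.real {x | k < v x} = 0 := by
    refine le_antisymm (le_of_mul_le_mul_left ?_ (Real.rpow_pos_of_pos hk p)) measureReal_nonneg
    rw [mul_zero, ← h0]
    exact rpow_mul_measureReal_le hp hv hk
  rw [measureReal_eq_zero_iff (measure_ne_top hp hv hk)] at hreal
  simpa only [ae_iff, not_le] using hreal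

theorem integral_smoothTrunc_rpow_le {w : ℝ} (hp : 0 < p) (hv : MemLp v (ENNReal.ofReal p) volume)
    (hk : 0 ≤ k) (hw : 0 < w) :
    ∫ x, |smoothTrunc k w (v x)| ^ p ≤ superlevelMass p v k := by
  refine integral_comp_le_superlevelMass (φ := fun t => |smoothTrunc k w t| ^ p) hp hv
    (fun t => by positivity)
    (fun t ht => by rw [smoothTrunc.of_le hw ht, abs_zero, Real.zero_rpow hp.ne']) fun t => ?_
  rw [abs_of_nonneg (smoothTrunc.nonneg hw t)]
  exact Real.rpow_le_rpow (smoothTrunc.nonneg hw t) (smoothTrunc.le_abs hk hw t) hp.le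

theorem le_mul_setIntegral_smoothTrunc (hp : 0 < p) (hv : MemLp v (ENNReal.ofReal p) volume)
    (hk : 0 ≤ k) (hkh : k < h)
    (htrunc : Integrable fun x => |smoothTrunc k (h - k) (v x)| ^ p) :
    superlevelMass p v h ≤ (Real.exp 1 * (h / (h - k))) ^ p
      * ∫ x in {x | h < v x}, |smoothTrunc k (h - k) (v x)| ^ p := by
  have hw : 0 < h - k := sub_pos.2 hkh
  have hh : 0 ≤ h := hk.trans hkh.le
  rw [← integral_const_mul]
  refine setIntegral_mono_on₀ (integrable_norm_rpow_of_memLp hp hv).integrableOn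
    (htrunc.const_mul _).integrableOn
    (nullMeasurableSet_lt aemeasurable_const hv.1.aemeasurable) fun x (hx : h < v x) => ?_
  have hvx : 0 ≤ v x := hh.trans hx.le
  rw [← Real.mul_rpow (by positivity) (abs_nonneg _), abs_of_nonneg hvx,
    abs_of_nonneg (smoothTrunc.nonneg hw _)]
  exact Real.rpow_le_rpow hvx (smoothTrunc.le_mul_smoothTrunc hk hkh hx.le) hp.le

end superlevelMass

namespace MemDeGiorgiClass

variable {N : ℕ} {p K : ℝ}

theorem exists_superlevelMass_le (N : ℕ) (hp : 1 < p) (hK : 0 ≤ K) :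
    ∃ s > (0 : ℝ), ∃ C > (0 : ℝ), ∀ (Ω : Set (EucN N)) (v : EucN N → ℝ),
      MemDeGiorgiClass p Ω K v → ∀ κ k h, 0 < κ → κ ≤ k → k < h → h ≤ 2 * κ →
        superlevelMass p v h ≤ (2 * Real.exp 1 * (κ / (h - k))) ^ p * C * superlevelMass p v k
          * (superlevelMass p v k / κ ^ p) ^ s := by
  obtain ⟨s, hs, C, hC, hFK⟩ := exists_setIntegral_rpow_le_of_memW10 N hp
  have hp0 : 0 < p := by linarith
  refine ⟨s, hs, C * (1 + K) + 1, by positivity, fun Ω v hv κ k h hκ hκk hkh hhκ => ?_⟩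
  have hk : 0 ≤ k := hκ.le.trans hκk
  have hh : 0 < h := hk.trans_lt hkh
  have hw : 0 < h - k := sub_pos.2 hkh
  have hmass : 0 ≤ superlevelMass p v k := superlevelMass.nonneg
  obtain ⟨g, hg, hgK⟩ := hv.exists_integral_le k (h - k) hk hw
  have hmeasure : volume.real {x | h < v x} ≤ superlevelMass p v k / κ ^ p := by
    rw [le_div_iff₀' (by positivity)]
    calc κ ^ p * volume.real {x | h < v x} ≤ h ^ p * volume.real {x | h < v x} := by
          gcongr
          linarith
      _ ≤ superlevelMass p v h := superlevelMass.rpow_mul_measureReal_le hp0 hv.memLp hh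
      _ ≤ superlevelMass p v k := superlevelMass.anti hp0 hv.memLp hkh.le
  have htrunc : ∫ x in {x | h < v x}, |smoothTrunc k (h - k) (v x)| ^ p ≤
      C * (superlevelMass p v k / κ ^ p) ^ s
        * (superlevelMass p v k + K * superlevelMass p v k) := by
    refine (hFK Ω _ g hg _ (superlevelMass.measure_ne_top hp0 hv.memLp hh)).trans ?_
    gcongr
    exact superlevelMass.integral_smoothTrunc_rpow_le hp0 hv.memLp hk hw
  calc superlevelMass p v h
      ≤ (Real.exp 1 * (h / (h - k))) ^ p
        * ∫ x in {x | h < v x}, |smoothTrunc k (h - k) (v x)| ^ p :=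
        superlevelMass.le_mul_setIntegral_smoothTrunc hp0 hv.memLp hk hkh
          (hg.integrable_abs_rpow hp0)
    _ ≤ (Real.exp 1 * (2 * κ / (h - k))) ^ p * (C * (superlevelMass p v k / κ ^ p) ^ s
        * (superlevelMass p v k + K * superlevelMass p v k)) := by gcongr
    _ = (2 * Real.exp 1 * (κ / (h - k))) ^ p * (C * (1 + K)) * superlevelMass p v k
        * (superlevelMass p v k / κ ^ p) ^ s := by ring_nf
    _ ≤ _ := by
      gcongr
      linarith

theorem exists_ae_le_two_mul (N : ℕ) (hp : 1 < p) (hK : 0 ≤ K) :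
    ∃ δ > (0 : ℝ), ∀ (Ω : Set (EucN N)) (v : EucN N → ℝ), MemDeGiorgiClass p Ω K v →
      ∀ κ > 0, ∫ x, |v x| ^ p ≤ δ * κ ^ p → ∀ᵐ x, v x ≤ 2 * κ := by
  obtain ⟨s, hs, C, hC, hstep⟩ := exists_superlevelMass_le N hp hK
  have hp0 : 0 < p := by linarith
  obtain ⟨δ, hδ, hiter⟩ := exists_tendsto_zero_of_le_pow_mul_rpow
    (A := (4 * Real.exp 1) ^ p * C) (b := 2 ^ p) (by positivity)
    (Real.one_lt_rpow one_lt_two hp0) hs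
  refine ⟨δ, hδ, fun Ω v hv κ hκ hsmall => ?_⟩
  have hκp : 0 < κ ^ p := by positivity
  have htendsto := hiter (fun j => superlevelMass p v (deGiorgiLevel κ j) / κ ^ p)
    (fun j => div_nonneg superlevelMass.nonneg hκp.le)
    (fun j => by
      have hlt : deGiorgiLevel κ j < deGiorgiLevel κ (j + 1) := by
        rw [← sub_pos, deGiorgiLevel.succ_sub]
        positivity
      have h := hstep Ω v hv κ _ _ hκ (deGiorgiLevel.self_le hκ.le j) hlt
        (deGiorgiLevel.le_two_mul hκ.le _)
      have hscale : 2 * Real.exp 1 * (κ / (κ / (2 * 2 ^ j))) = 4 * Real.exp 1 * 2 ^ j := by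
        field_simp
        norm_num
      rw [deGiorgiLevel.succ_sub, hscale, Real.mul_rpow (by positivity) (by positivity),
        ← Real.rpow_natCast_mul zero_le_two, mul_comm _ p, Real.rpow_mul_natCast zero_le_two] at h
      rw [div_le_iff₀ hκp]
      refine h.trans_eq ?_
      field_simp)
    ((div_le_iff₀ hκp).2 ((superlevelMass.le_integral hp0 hv.memLp).trans hsmall))
  refine superlevelMass.ae_le_of_eq_zero hp0 hv.memLp (by positivity)
    (le_antisymm ?_ superlevelMass.nonneg)
  have hlimit : superlevelMass p v (2 * κ) / κ ^ p ≤ 0 := ge_of_tendsto' htendsto fun j =>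
    div_le_div_of_nonneg_right
      (superlevelMass.anti hp0 hv.memLp (deGiorgiLevel.le_two_mul hκ.le j)) hκp.le
  simpa using (div_le_iff₀ hκp).1 hlimit

theorem exists_ae_le (N : ℕ) (hp : 1 < p) (hK : 0 ≤ K) :
    ∃ C > (0 : ℝ), ∀ (Ω : Set (EucN N)) (v : EucN N → ℝ), MemDeGiorgiClass p Ω K v →
      ∀ᵐ x, v x ≤ C * (∫ x, |v x| ^ p) ^ (1 / p) := by
  obtain ⟨δ, hδ, hbound⟩ := exists_ae_le_two_mul N hp hK
  have hp0 : 0 < p := by linarith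
  refine ⟨2 * δ⁻¹ ^ (1 / p), by positivity, fun Ω v hv => ?_⟩
  have hint := integrable_norm_rpow_of_memLp hp0 hv.memLp
  have hnonneg : 0 ≤ ∫ x, |v x| ^ p := integral_nonneg fun x => by positivity
  rcases hnonneg.eq_or_lt with hzero | hpos
  · filter_upwards [(integral_eq_zero_iff_of_nonneg (fun x => by positivity) hint).1 hzero.symm]
      with x hx
    rw [Pi.zero_apply, Real.rpow_eq_zero (norm_nonneg _) hp0.ne', norm_eq_zero] at hx
    rw [hx]
    positivity
  · have hκ : δ * (δ⁻¹ ^ (1 / p) * (∫ x, |v x| ^ p) ^ (1 / p)) ^ p = ∫ x, |v x| ^ p := by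
      rw [← Real.mul_rpow (by positivity) hnonneg, one_div,
        Real.rpow_inv_rpow (by positivity) hp0.ne', mul_inv_cancel_left₀ hδ.ne']
    simpa only [mul_assoc] using hbound Ω v hv _ (by positivity) hκ.ge

end MemDeGiorgiClass

/-! ### Exponential weights -/

section ExpWeight

variable {V : Type*} [NormedAddCommGroup V] {α δ : ℝ}

/-- A smooth function within distance `1` of the norm, in whose place it is used in exponential
weights. -/
def smoothNorm (x : V) : ℝ := √(1 + ‖x‖ ^ 2)

namespace smoothNorm

theorem pos (x : V) : 0 < smoothNorm x := Real.sqrt_pos.2 (by positivity)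

theorem norm_le (x : V) : ‖x‖ ≤ smoothNorm x := Real.le_sqrt_of_sq_le (by linarith)

theorem le_one_add_norm (x : V) : smoothNorm x ≤ 1 + ‖x‖ :=
  Real.sqrt_le_iff.2 ⟨by positivity, by nlinarith [norm_nonneg x]⟩

variable [InnerProductSpace ℝ V]

theorem contDiff : ContDiff ℝ (⊤ : ℕ∞) (smoothNorm (V := V)) :=
  (contDiff_const.add (contDiff_norm_sq ℝ)).sqrt fun x => by positivity

theorem norm_gradient_le_one [CompleteSpace V] (x : V) : ‖gradient smoothNorm x‖ ≤ 1 := by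
  have hsqrt : HasDerivAt (fun s => √(1 + s)) (1 / (2 * smoothNorm x)) (‖x‖ ^ 2) :=
    ((hasDerivAt_id (‖x‖ ^ 2)).const_add 1).sqrt (by simp only [id]; positivity)
  have hsq : ‖gradient (fun y : V => ‖y‖ ^ 2) x‖ = 2 * ‖x‖ := by
    rw [norm_gradient, (hasStrictFDerivAt_norm_sq x).hasFDerivAt.fderiv, ← Nat.cast_smul_eq_nsmul ℝ,
      norm_smul, innerSL_apply_norm, Real.norm_natCast, Nat.cast_ofNat]
  have hpos := pos x
  change ‖gradient (fun y : V => √(1 + ‖y‖ ^ 2)) x‖ ≤ 1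
  rw [gradient_comp (f := fun y : V => ‖y‖ ^ 2) hsqrt.differentiableAt
      ((contDiff_norm_sq ℝ (n := 1)).differentiable one_ne_zero x), hsqrt.deriv,
    norm_smul, hsq, Real.norm_of_nonneg (by positivity), one_div, ← div_eq_inv_mul,
    div_le_one (by positivity)]
  linarith [norm_le x]

end smoothNorm

/-- A bounded truncation of `smoothNorm`, which it approaches as `δ → 0`. -/
def truncNorm (δ : ℝ) (x : V) : ℝ := smoothNorm x / (1 + δ * smoothNorm x)

namespace truncNorm

theorem denom_pos (hδ : 0 ≤ δ) (x : V) : 0 < 1 + δ * smoothNorm x := by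
  have := smoothNorm.pos x
  positivity

theorem le_inv (hδ : 0 < δ) (x : V) : truncNorm δ x ≤ δ⁻¹ := by
  rw [truncNorm, div_le_iff₀ (denom_pos hδ.le x), mul_add, inv_mul_cancel_left₀ hδ.ne']
  exact le_add_of_nonneg_left (by positivity)

theorem le_one_add_norm (hδ : 0 ≤ δ) (x : V) : truncNorm δ x ≤ 1 + ‖x‖ :=
  (div_le_self (smoothNorm.pos x).le (le_add_of_nonneg_right
    (mul_nonneg hδ (smoothNorm.pos x).le))).trans (smoothNorm.le_one_add_norm x)

theorem tendsto_smoothNorm (x : V) :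
    Tendsto (fun δ => truncNorm δ x) (𝓝 0) (𝓝 (smoothNorm x)) := by
  have hcont : ContinuousAt (fun δ => truncNorm δ x) 0 :=
    continuousAt_const.div (by fun_prop) (denom_pos le_rfl x).ne'
  simpa only [ContinuousAt, truncNorm, zero_mul, add_zero, div_one] using hcont

variable [InnerProductSpace ℝ V]

theorem contDiff (hδ : 0 ≤ δ) : ContDiff ℝ (⊤ : ℕ∞) (truncNorm (V := V) δ) :=
  smoothNorm.contDiff.div (contDiff_const.add (contDiff_const.mul smoothNorm.contDiff))
    fun x => (denom_pos hδ x).ne'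

theorem norm_gradient_le_one [CompleteSpace V] (hδ : 0 ≤ δ) (x : V) :
    ‖gradient (truncNorm δ) x‖ ≤ 1 := by
  have hdenom := denom_pos hδ x
  have hdiv : HasDerivAt (fun t => t / (1 + δ * t)) (1 / (1 + δ * smoothNorm x) ^ 2)
      (smoothNorm x) :=
    ((hasDerivAt_id' (smoothNorm x)).div
      (((hasDerivAt_id' (smoothNorm x)).const_mul δ).const_add 1) hdenom.ne').congr_deriv (by ring)
  change ‖gradient (fun y => smoothNorm y / (1 + δ * smoothNorm y)) x‖ ≤ 1
  rw [gradient_comp hdiv.differentiableAt (smoothNorm.contDiff.differentiable (by simp) x),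
    hdiv.deriv, norm_smul, Real.norm_of_nonneg (by positivity)]
  refine mul_le_one₀ ((div_le_one (by positivity)).2 (one_le_pow₀ ?_)) (norm_nonneg _)
    (smoothNorm.norm_gradient_le_one x)
  exact le_add_of_nonneg_right (mul_nonneg hδ (smoothNorm.pos x).le)

end truncNorm

/-- The weight `exp (α ‖x‖)`, smoothed at the origin and, when `δ > 0`, kept bounded. -/
def expWeight (α δ : ℝ) (x : V) : ℝ := Real.exp (α * truncNorm δ x)

namespace expWeight

theorem le_exp (hα : 0 ≤ α) (hδ : 0 ≤ δ) (x : V) :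
    expWeight α δ x ≤ Real.exp (α * (1 + ‖x‖)) :=
  Real.exp_le_exp.2 (mul_le_mul_of_nonneg_left (truncNorm.le_one_add_norm hδ x) hα)

theorem tendsto_exp_smoothNorm (α : ℝ) (x : V) :
    Tendsto (fun δ => expWeight α δ x) (𝓝 0) (𝓝 (Real.exp (α * smoothNorm x))) :=
  ((truncNorm.tendsto_smoothNorm x).const_mul α).rexp

theorem norm_gradient_le [InnerProductSpace ℝ V] [CompleteSpace V] (hα : 0 ≤ α) (hδ : 0 ≤ δ)
    (x : V) : ‖gradient (expWeight α δ) x‖ ≤ α * expWeight α δ x := by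
  have hexp : HasDerivAt (fun t => Real.exp (α * t)) (expWeight α δ x * (α * 1)) (truncNorm δ x) :=
    ((hasDerivAt_id' (truncNorm δ x)).const_mul α).exp
  have hpos : 0 < expWeight α δ x := Real.exp_pos _
  change ‖gradient (fun y => Real.exp (α * truncNorm δ y)) x‖ ≤ _
  rw [gradient_comp hexp.differentiableAt ((truncNorm.contDiff hδ).differentiable (by simp) x),
    hexp.deriv, norm_smul, Real.norm_of_nonneg (by positivity), mul_one, mul_comm α]
  exact mul_le_of_le_one_right (by positivity) (truncNorm.norm_gradient_le_one hδ x)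

theorem isSlowWeight {N : ℕ} (hα : 0 ≤ α) (hδ : 0 < δ) :
    IsSlowWeight α (expWeight (V := EucN N) α δ) where
  contDiff := (contDiff_const.mul (truncNorm.contDiff hδ.le)).exp
  pos _ := Real.exp_pos _
  norm_gradient_le := norm_gradient_le hα hδ.le
  exists_le := ⟨Real.exp (α * δ⁻¹), fun x =>
    Real.exp_le_exp.2 (mul_le_mul_of_nonneg_left (truncNorm.le_inv hδ x) hα)⟩

end expWeight

end ExpWeight

/-! ### Exponential decay -/

theorem ae_abs_le_mul_exp_of_expWeight {V : Type*} [NormedAddCommGroup V] [MeasurableSpace V]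
    {μ : Measure V} {α M : ℝ} (hα : 0 ≤ α) {u : V → ℝ}
    (h : ∀ δ > (0 : ℝ), ∀ᵐ x ∂μ, expWeight α δ x * |u x| ≤ M) :
    ∀ᵐ x ∂μ, |u x| ≤ M * Real.exp (-α * ‖x‖) := by
  filter_upwards [ae_all_iff.2 fun n : ℕ => h (1 / (n + 1)) (by positivity)] with x hx
  have hlim : Real.exp (α * smoothNorm x) * |u x| ≤ M := le_of_tendsto'
    (((expWeight.tendsto_exp_smoothNorm α x).comp
      tendsto_one_div_add_atTop_nhds_zero_nat).mul_const |u x|) hx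
  have hexp : Real.exp (α * ‖x‖) ≤ Real.exp (α * smoothNorm x) :=
    Real.exp_le_exp.2 (mul_le_mul_of_nonneg_left (smoothNorm.norm_le x) hα)
  rw [neg_mul, Real.exp_neg, ← div_eq_mul_inv, le_div_iff₀' (Real.exp_pos _)]
  exact (mul_le_mul_of_nonneg_right hexp (abs_nonneg _)).trans hlim

theorem exists_pos_lt_of_continuousAt_zero {f : ℝ → ℝ} {r : ℝ} (hf : ContinuousAt f 0)
    (hr : f 0 < r) : ∃ a > (0 : ℝ), f a < r :=
  ((eventually_mem_nhdsWithin (s := Ioi 0)).and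
    ((hf.eventually_lt_const hr).filter_mono nhdsWithin_le_nhds)).exists

theorem exists_lt_lambda1p_of_lt_Einfty {N : ℕ} {p : ℝ} {hp : 1 ≤ p} {Ω : Set (EucN N)} {t : ℝ≥0∞}
    (ht : t < Einfty N p hp Ω) :
    ∃ R > (0 : ℝ), t < lambda1p N p hp (Ω \ closure (ball (0 : EucN N) R)) := by
  simpa only [Einfty, lt_iSup_iff, mem_Ioi, exists_prop] using ht

theorem lambdaLS_mono {N : ℕ} {p : ℝ} (hp : 1 ≤ p) (Ω : Set (EucN N)) :
    Monotone (lambdaLS N p hp Ω) := fun _ _ h =>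
  biInf_mono fun _ hK =>
    ⟨hK.1, hK.2.1, hK.2.2.1, hK.2.2.2.1, fun j hj => h.trans (hK.2.2.2.2 j hj)⟩

namespace IsEigenpair

variable {N : ℕ} {p lam μ ε C α R : ℝ} {Ω : Set (EucN N)}

theorem exists_ae_expWeight_mul_le (hp : 1 < p) (hlam : 0 ≤ lam) (hα : 0 ≤ α) (hC0 : 0 ≤ C)
    (hC : ∀ a b : EucN N,
      ‖a + b‖ ^ p ≤ (1 + ε) * (‖a‖ ^ p + p * ⟪pDual p a, b⟫) + C * ‖b‖ ^ p)
    (hR : 0 ≤ R) (hμ : ENNReal.ofReal μ ≤ lambda1p N p hp.le (Ω \ closure (ball (0 : EucN N) R)))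
    (hgap : (1 + ε) * lam + C * (2 ^ (p - 1) * α ^ p) < μ) :
    ∃ M > (0 : ℝ), ∀ u g, IsEigenpair p Ω lam u g → ∀ δ > (0 : ℝ),
      ∀ᵐ x, expWeight α δ x * u x ≤ M * (∫ x, |u x| ^ p) ^ (1 / p) := by
  obtain ⟨K, hK, hweighted⟩ := exists_integral_mul_rpow_le hp hC0 hC hR hμ
    (Real.exp_nonneg (α * (1 + (R + 2)))) hgap
  obtain ⟨M, hM, hsup⟩ := MemDeGiorgiClass.exists_ae_le N hp
    (add_nonneg (mul_nonneg (by positivity) hlam) (pDual.errorConst_nonneg (by linarith) hα) :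
      0 ≤ 2 ^ p * lam + pDual.errorConst p α)
  refine ⟨M * (K + 1) ^ (1 / p), by positivity, fun u g h δ hδ => ?_⟩
  have hG := expWeight.isSlowWeight (N := N) hα hδ
  have hint := hweighted u g h _ hG fun x hx =>
    (expWeight.le_exp hα hδ.le x).trans (Real.exp_le_exp.2 (by gcongr))
  have hu0 : 0 ≤ ∫ x, |u x| ^ p := integral_nonneg fun x => by positivity
  filter_upwards [hsup Ω _ (h.memDeGiorgiClass hp hlam hG)] with x hx
  calc expWeight α δ x * u x ≤ M * (∫ x, |expWeight α δ x * u x| ^ p) ^ (1 / p) := hx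
    _ ≤ M * ((K + 1) * ∫ x, |u x| ^ p) ^ (1 / p) := by
      gcongr
      exact hint.trans (mul_le_mul_of_nonneg_right (by linarith) hu0)
    _ = M * (K + 1) ^ (1 / p) * (∫ x, |u x| ^ p) ^ (1 / p) := by
      rw [Real.mul_rpow (by positivity) hu0, mul_assoc]

theorem exists_ae_abs_le_exp_of_gap (hp : 1 < p) (hlam : 0 ≤ lam) (hα : 0 ≤ α) (hC0 : 0 ≤ C)
    (hC : ∀ a b : EucN N,
      ‖a + b‖ ^ p ≤ (1 + ε) * (‖a‖ ^ p + p * ⟪pDual p a, b⟫) + C * ‖b‖ ^ p)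
    (hR : 0 ≤ R) (hμ : ENNReal.ofReal μ ≤ lambda1p N p hp.le (Ω \ closure (ball (0 : EucN N) R)))
    (hgap : (1 + ε) * lam + C * (2 ^ (p - 1) * α ^ p) < μ) :
    ∃ M > (0 : ℝ), ∀ u g, IsEigenpair p Ω lam u g →
      ∀ᵐ x, |u x| ≤ M * (∫ y, |u y| ^ p) ^ (1 / p) * Real.exp (-α * ‖x‖) := by
  obtain ⟨M, hM, hle⟩ := exists_ae_expWeight_mul_le hp hlam hα hC0 hC hR hμ hgap
  refine ⟨M, hM, fun u g h => ae_abs_le_mul_exp_of_expWeight hα fun δ hδ => ?_⟩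
  filter_upwards [hle u g h δ hδ, hle _ _ (h.neg hp.le) δ hδ] with x hpos hneg
  simp only [abs_neg] at hneg
  rcases abs_choice (u x) with hx | hx
  · rwa [hx]
  · rwa [hx]

theorem exists_ae_abs_le_exp_of_lt_Einfty (hp : 1 < p) (hlam : 0 ≤ lam)
    (hlt : ENNReal.ofReal lam < Einfty N p hp.le Ω) :
    ∃ M > (0 : ℝ), ∃ α > (0 : ℝ), ∀ u g, IsEigenpair p Ω lam u g →
      ∀ᵐ x, |u x| ≤ M * (∫ y, |u y| ^ p) ^ (1 / p) * Real.exp (-α * ‖x‖) := by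
  obtain ⟨R, hR, hltR⟩ := exists_lt_lambda1p_of_lt_Einfty hlt
  obtain ⟨μ, -, hlamμ, hμ⟩ := ENNReal.lt_iff_exists_real_btwn.1 hltR
  replace hlamμ : lam < μ := (ENNReal.ofReal_lt_ofReal_iff_of_nonneg hlam).1 hlamμ
  obtain ⟨ε, hε, hεμ⟩ := exists_pos_lt_of_continuousAt_zero (f := fun ε => (1 + ε) * lam)
    (by fun_prop) (by simpa only [add_zero, one_mul])
  obtain ⟨C, hC0, hC⟩ := pDual.exists_norm_add_rpow_le (V := EucN N) hp hε
  obtain ⟨α, hα, hgap⟩ := exists_pos_lt_of_continuousAt_zero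
    (f := fun α => (1 + ε) * lam + C * (2 ^ (p - 1) * α ^ p))
    ((((Real.continuousAt_rpow_const 0 p (Or.inr (by linarith))).const_mul _).const_mul _).const_add
      _) (by simpa only [Real.zero_rpow (show p ≠ 0 by linarith), mul_zero, add_zero])
  obtain ⟨M, hM, hdecay⟩ := exists_ae_abs_le_exp_of_gap hp hlam hα.le hC0 hC hR.le hμ.le hgap
  exact ⟨M, hM, α, hα, hdecay⟩

theorem exists_ae_abs_le_exp_of_Einfty_eq_top (hp : 1 < p) (hlam : 0 ≤ lam)
    (htop : Einfty N p hp.le Ω = ⊤) (hα : 0 ≤ α) :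
    ∃ M > (0 : ℝ), ∀ u g, IsEigenpair p Ω lam u g →
      ∀ᵐ x, |u x| ≤ M * (∫ y, |u y| ^ p) ^ (1 / p) * Real.exp (-α * ‖x‖) := by
  obtain ⟨C, hC0, hC⟩ := pDual.exists_norm_add_rpow_le (V := EucN N) hp one_pos
  obtain ⟨R, hR, hltR⟩ := exists_lt_lambda1p_of_lt_Einfty
    (ENNReal.ofReal_lt_top.trans_eq htop.symm :
      ENNReal.ofReal ((1 + 1) * lam + C * (2 ^ (p - 1) * α ^ p) + 1) < Einfty N p hp.le Ω)
  exact exists_ae_abs_le_exp_of_gap hp hlam hα hC0 hC hR.le hltR.le (lt_add_one _)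

end IsEigenpair

theorem statement1_general (N : ℕ) (p : ℝ) (hp1 : 1 < p) (Ω : Set (EucN N)) (lam : ℝ)
    (hlam : 0 ≤ lam) :
    (ENNReal.ofReal lam < Einfty N p hp1.le Ω →
      ∃ C > (0 : ℝ), ∃ α > (0 : ℝ), ∀ w, IsEigenfunction N p hp1.le Ω lam w →
        ∀ᵐ x, |w.1 x| ≤ C * (∫ y, |w.1 y| ^ p) ^ (1/p) * Real.exp (-α * ‖x‖)) ∧
    (Einfty N p hp1.le Ω = ⊤ →
      ∀ α > (0 : ℝ), ∃ C > (0 : ℝ), ∀ w, IsEigenfunction N p hp1.le Ω lam w →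
        ∀ᵐ x, |w.1 x| ≤ C * (∫ y, |w.1 y| ^ p) ^ (1/p) * Real.exp (-α * ‖x‖)) := by
  refine ⟨fun hlt => ?_, fun htop α hα => ?_⟩
  · obtain ⟨C, hC, α, hα, hdecay⟩ :=
      IsEigenpair.exists_ae_abs_le_exp_of_lt_Einfty hp1 hlam hlt
    exact ⟨C, hC, α, hα, fun w hw => hdecay _ _ (.of_isEigenfunction hp1 hw)⟩
  · obtain ⟨C, hC, hdecay⟩ :=
      IsEigenpair.exists_ae_abs_le_exp_of_Einfty_eq_top hp1 hlam htop hα.le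
    exact ⟨C, hC, fun w hw => hdecay _ _ (.of_isEigenfunction hp1 hw)⟩

theorem statement1 (N : ℕ) (p : ℝ) (hp1 : 1 < p) (Ω : Set (EucN N)) (hΩ : IsOpen Ω)
    (k : ℕ) (hk : k ≠ 0) (hlt : lambdaLS N p hp1.le Ω k < Einfty N p hp1.le Ω) :
    (Einfty N p hp1.le Ω ≠ ⊤ →
      ∀ ℓ : ℕ, 1 ≤ ℓ → ℓ ≤ k → ∃ C > (0 : ℝ), ∃ α > (0 : ℝ),
        ∀ w, IsEigenfunction N p hp1.le Ω ((lambdaLS N p hp1.le Ω ℓ).toReal) w →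
          ∀ᵐ x, x ∈ Ω →
            |w.1 x| ≤ C * (∫ y, |w.1 y| ^ p) ^ (1/p) * Real.exp (-α * ‖x‖)) ∧
    (Einfty N p hp1.le Ω = ⊤ →
      ∀ ℓ : ℕ, 1 ≤ ℓ → ∀ α > (0 : ℝ), ∃ C > (0 : ℝ),
        ∀ w, IsEigenfunction N p hp1.le Ω ((lambdaLS N p hp1.le Ω ℓ).toReal) w →
          ∀ᵐ x, x ∈ Ω →
            |w.1 x| ≤ C * (∫ y, |w.1 y| ^ p) ^ (1/p) * Real.exp (-α * ‖x‖)) := by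
  refine ⟨fun _ ℓ _ hℓ => ?_, fun htop ℓ _ α hα => ?_⟩
  · have hlt_E := ENNReal.ofReal_toReal_le.trans_lt ((lambdaLS_mono hp1.le Ω hℓ).trans_lt hlt)
    obtain ⟨C, hC, α, hα, hdecay⟩ :=
      (statement1_general N p hp1 Ω _ ENNReal.toReal_nonneg).1 hlt_E
    exact ⟨C, hC, α, hα, fun w hw => (hdecay w hw).mono fun _ hx _ => hx⟩
  · obtain ⟨C, hC, hdecay⟩ :=
      (statement1_general N p hp1 Ω _ ENNReal.toReal_nonneg).2 htop α hα
    exact ⟨C, hC, fun w hw => (hdecay w hw).mono fun _ hx _ => hx⟩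

end
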